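/- Assume the family Ψ_n satisfies properties (P1), (P2), (P3), (P4). Then for each n ≥ 1 there exist functions X_n(x₁,…,x_n) and X̄_n^±(x₁,…,x_n) such that Z_n = (∏_{i=1}^n ϑ₄(2(η+x_i),p²) ϑ₁(η+x_i) ϑ₁(η−x_i)) · X_n and Z̄_n^± = (∏_{i=1}^n ϑ₁(2(η+x_i),p²)) · X̄_n^±, where, with respect to each x_i, X_n is an even theta function of degree 2(n−1), nome p and norm 0, and X̄_n^± is an even theta function of degree 2n, nome p and norm 0; moreover, for n ≥ 2, X_n and X̄_n^± are symmetric functions of x₁,…,x_n. -/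

import Mathlib

noncomputable section

open Complex
open scoped BigOperators

/-- Jacobi theta function `ϑ₁(z|τ)` with nome `p = e^{iπτ}` (Whittaker–Watson convention). -/
def th1 (z τ : ℂ) : ℂ :=
  -Complex.I * ∑' n : ℤ, (-1 : ℂ) ^ n *
    Complex.exp ((Real.pi : ℂ) * Complex.I * τ * ((n : ℂ) + 1/2) ^ 2 + (2 * (n : ℂ) + 1) * Complex.I * z)

/-- Jacobi theta function `ϑ₂(z|τ)`. -/
def th2 (z τ : ℂ) : ℂ :=
  ∑' n : ℤ,
    Complex.exp ((Real.pi : ℂ) * Complex.I * τ * ((n : ℂ) + 1/2) ^ 2 + (2 * (n : ℂ) + 1) * Complex.I * z)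

/-- Jacobi theta function `ϑ₃(z|τ)`. -/
def th3 (z τ : ℂ) : ℂ :=
  ∑' n : ℤ, Complex.exp ((Real.pi : ℂ) * Complex.I * τ * (n : ℂ) ^ 2 + 2 * (n : ℂ) * Complex.I * z)

/-- Jacobi theta function `ϑ₄(z|τ)`. -/
def th4 (z τ : ℂ) : ℂ :=
  ∑' n : ℤ, (-1 : ℂ) ^ n *
    Complex.exp ((Real.pi : ℂ) * Complex.I * τ * (n : ℂ) ^ 2 + 2 * (n : ℂ) * Complex.I * z)

/-- The crossing parameter `η = π/3`. -/
def ηc : ℂ := (Real.pi : ℂ) / 3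

/-- The elliptic nome `p = e^{iπτ}`. -/
def pnome (τ : ℂ) : ℂ := Complex.exp ((Real.pi : ℂ) * Complex.I * τ)

/-- `ζ = (ϑ₁(η,p²)/ϑ₄(η,p²))²`. -/
def zet (τ : ℂ) : ℂ := (th1 ηc (2 * τ) / th4 ηc (2 * τ)) ^ 2

/-- The nome `p` is real with `0 < p < 1`. -/
def preal (τ : ℂ) : Prop := (pnome τ).im = 0 ∧ 0 < (pnome τ).re ∧ (pnome τ).re < 1

/-- A tuple given by a list of prescribed entries, padded by zeros. -/
def padded {n : ℕ} (l : List ℂ) : Fin n → ℂ := fun j => l.getD (j : ℕ) 0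

/-- Extension of a tuple by a list of prescribed further entries (padded by zeros). -/
def extL {m n : ℕ} (w : Fin m → ℂ) (l : List ℂ) : Fin n → ℂ :=
  fun j => if h : (j : ℕ) < m then w ⟨j, h⟩ else l.getD ((j : ℕ) - m) 0

/-- First `k` entries of a `2k`-tuple. -/
def firstHalf {k : ℕ} (x : Fin (2 * k) → ℂ) : Fin k → ℂ :=
  fun i => x ⟨(i : ℕ), by have := i.2; omega⟩

/-- Last `k` entries of a `2k`-tuple. -/
def secondHalf {k : ℕ} (x : Fin (2 * k) → ℂ) : Fin k → ℂ :=
  fun i => x ⟨k + (i : ℕ), by have := i.2; omega⟩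

/-- `𝕙(x,y) = ϑ₁(x−y+η)ϑ₁(x−y−η)ϑ₁(x+y+η)ϑ₁(x+y−η)`. -/
def hh (τ x y : ℂ) : ℂ :=
  th1 (x - y + ηc) τ * th1 (x - y - ηc) τ * th1 (x + y + ηc) τ * th1 (x + y - ηc) τ

/-- `𝔻(x₁,…,x_k) = ∏_{i<j} ϑ₁(x_j−x_i)ϑ₁(x_j+x_i)`. -/
def vdTheta (τ : ℂ) {k : ℕ} (y : Fin k → ℂ) : ℂ :=
  ∏ i : Fin k, ∏ j : Fin k, if i < j then th1 (y j - y i) τ * th1 (y j + y i) τ else 1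

/-- The elliptic Tsuchiya determinant `ℍ_{2k}(x₁,…,x_k; x_{k+1},…,x_{2k})`. -/
def tsuchiya (τ : ℂ) (k : ℕ) (x : Fin (2 * k) → ℂ) : ℂ :=
  (∏ i : Fin k, ∏ j : Fin k, hh τ (firstHalf x i) (secondHalf x j))
    / (vdTheta τ (firstHalf x) * vdTheta τ (secondHalf x))
    * Matrix.det (Matrix.of fun i j : Fin k => (hh τ (firstHalf x i) (secondHalf x j))⁻¹)

/-- The expression defining the elliptic Tsuchiya determinant is well defined:
the Vandermonde-type denominators and the entries `𝕙(x_i,x_{j+k})` are nonzero. -/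
def tsuDefined (τ : ℂ) (k : ℕ) (x : Fin (2 * k) → ℂ) : Prop :=
  (∀ i j : Fin k, i ≠ j →
    th1 (firstHalf x j - firstHalf x i) τ ≠ 0 ∧ th1 (firstHalf x j + firstHalf x i) τ ≠ 0) ∧
  (∀ i j : Fin k, i ≠ j →
    th1 (secondHalf x j - secondHalf x i) τ ≠ 0 ∧ th1 (secondHalf x j + secondHalf x i) τ ≠ 0) ∧
  (∀ i j : Fin k, hh τ (firstHalf x i) (secondHalf x j) ≠ 0)

/-- `h(w,w') = 1 − (3+ζ²)ww' + (1−ζ²)ww'(w+w')`. -/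
def hpol (ζ w w' : ℂ) : ℂ := 1 - (3 + ζ ^ 2) * w * w' + (1 - ζ ^ 2) * w * w' * (w + w')

/-- Vandermonde product `Δ(w₁,…,w_k) = ∏_{i<j}(w_j − w_i)`. -/
def vdm {k : ℕ} (y : Fin k → ℂ) : ℂ :=
  ∏ i : Fin k, ∏ j : Fin k, if i < j then y j - y i else 1

/-- The determinant-ratio expression defining the polynomial `H_{2k}`. -/
def Hratio (ζ : ℂ) (k : ℕ) (w : Fin (2 * k) → ℂ) : ℂ :=
  (∏ i : Fin k, ∏ j : Fin k, hpol ζ (firstHalf w i) (secondHalf w j))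
    / (vdm (firstHalf w) * vdm (secondHalf w))
    * Matrix.det (Matrix.of fun i j : Fin k => (hpol ζ (firstHalf w i) (secondHalf w j))⁻¹)

/-- The expression `Hratio` is well defined at `w`. -/
def HratioDefined (ζ : ℂ) (k : ℕ) (w : Fin (2 * k) → ℂ) : Prop :=
  (∀ i j : Fin k, i ≠ j → firstHalf w i ≠ firstHalf w j) ∧
  (∀ i j : Fin k, i ≠ j → secondHalf w i ≠ secondHalf w j) ∧
  (∀ i j : Fin k, hpol ζ (firstHalf w i) (secondHalf w j) ≠ 0)

/-- `H` is the family of Rosengren–Zinn-Justin polynomials `H_{2k}` for parameter `ζ`: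
for each `k`, `H k` is a polynomial function of the `2k` variables agreeing with the
determinant-ratio formula wherever the latter is defined, and `H 0 = 1`. -/
def IsHFamily (ζ : ℂ) (H : (k : ℕ) → (Fin (2 * k) → ℂ) → ℂ) : Prop :=
  (∀ w, H 0 w = 1) ∧
  (∀ k : ℕ, ∃ P : MvPolynomial (Fin (2 * k)) ℂ, ∀ w, H k w = MvPolynomial.eval w P) ∧
  (∀ (k : ℕ) (w : Fin (2 * k) → ℂ), HratioDefined ζ k w → H k w = Hratio ζ k w)

/-- Vertex weight `a(u)`. -/
def av (τ u : ℂ) : ℂ := th4 (2*ηc) (2*τ) * th1 (u + 2*ηc) (2*τ) * th4 u (2*τ)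
/-- Vertex weight `b(u)`. -/
def bv (τ u : ℂ) : ℂ := th4 (2*ηc) (2*τ) * th4 (u + 2*ηc) (2*τ) * th1 u (2*τ)
/-- Vertex weight `c(u)`. -/
def cv (τ u : ℂ) : ℂ := th1 (2*ηc) (2*τ) * th4 (u + 2*ηc) (2*τ) * th4 u (2*τ)
/-- Vertex weight `d(u)`. -/
def dv (τ u : ℂ) : ℂ := th1 (2*ηc) (2*τ) * th1 (u + 2*ηc) (2*τ) * th1 u (2*τ)
/-- `r(u) = a(u) + b(u)`. -/
def rv (τ u : ℂ) : ℂ := av τ u + bv τ u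

/-- Entries of the `R`-matrix of the eight-vertex model, in the basis `{↑↑,↑↓,↓↑,↓↓}`
identified with `Fin 2 × Fin 2` (`↑ = 0`, `↓ = 1`). -/
def Rent (τ u : ℂ) (p q : Fin 2 × Fin 2) : ℂ :=
  if p = q then (if p.1 = p.2 then av τ u else bv τ u)
  else if q = (p.2, p.1) then cv τ u
  else if p.1 = p.2 ∧ q.1 = q.2 then dv τ u
  else 0

/-- Entries of `Ř(u) = 𝒫 R(u)`. -/
def Rcheckent (τ u : ℂ) (p q : Fin 2 × Fin 2) : ℂ := Rent τ u (p.2, p.1) q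

/-- The boundary vector `χ(x) ∈ ℂ²⊗ℂ²`. -/
def chiV (τ lam x : ℂ) : Fin 2 × Fin 2 → ℂ := fun p =>
  if p = ((0 : Fin 2), (1 : Fin 2)) then th1 (x + lam) (2*τ) * th4 (x - lam - 2*ηc) (2*τ)
  else if p = ((1 : Fin 2), (0 : Fin 2)) then th1 (x - lam - 2*ηc) (2*τ) * th4 (x + lam) (2*τ)
  else 0

/-- The boundary vector `χ̄(x) ∈ ℂ²⊗ℂ²`. -/
def chibarV (τ lam x : ℂ) : Fin 2 × Fin 2 → ℂ := fun p =>
  if p = ((0 : Fin 2), (0 : Fin 2)) then th1 (x + lam) (2*τ) * th1 (x - lam - 2*ηc) (2*τ)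
  else if p = ((1 : Fin 2), (1 : Fin 2)) then th4 (x - lam - 2*ηc) (2*τ) * th4 (x + lam) (2*τ)
  else 0

/-- A family `Ψ_n(u₁,…,u_{2n+1}) ∈ (ℂ²)^{⊗(2n+1)}`, represented by its components
with respect to spin configurations `α : Fin (2n+1) → Fin 2` (`↑ = 0`, `↓ = 1`). -/
abbrev PsiFam := (n : ℕ) → (Fin (2 * n + 1) → ℂ) → (Fin (2 * n + 1) → Fin 2) → ℂ

/-- The action of `Ř(u)` on tensor factors `i`, `j` of `(ℂ²)^{⊗L}`. -/
def applyRc (τ u : ℂ) {L : ℕ} (i j : Fin L) (ψ : (Fin L → Fin 2) → ℂ) :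
    (Fin L → Fin 2) → ℂ := fun α =>
  ∑ s : Fin 2, ∑ t : Fin 2,
    Rcheckent τ u (α i, α j) (s, t) * ψ (Function.update (Function.update α i s) j t)

/-- Spin flip. -/
def flipS : Fin 2 → Fin 2 := fun s => if s = 0 then 1 else 0

/-- Components of the singlet `s = ↑↓ − ↓↑`. -/
def singletC : Fin 2 → Fin 2 → ℂ := fun s t =>
  if s = 0 ∧ t = 1 then 1 else if s = 1 ∧ t = 0 then -1 else 0

/-- Delete the entries at positions `i`, `i+1` from a tuple. -/
def delTwo {α : Type*} {n : ℕ} (i : ℕ) (u : Fin (2 * (n + 1) + 1) → α) : Fin (2 * n + 1) → α :=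
  fun j => if _h : (j : ℕ) < i then u ⟨j, by have := j.2; omega⟩
           else u ⟨(j : ℕ) + 2, by have := j.2; omega⟩

/-- The components of `Ψ_n` are entire functions of each `u_i`. -/
def PsiEntire (Ψ : PsiFam) : Prop :=
  ∀ (n : ℕ) (u : Fin (2*n+1) → ℂ) (i : Fin (2*n+1)) (α : Fin (2*n+1) → Fin 2),
    Differentiable ℂ fun z => Ψ n (Function.update u i z) α

/-- (P1): the exchange relations. -/
def PsiP1 (τ : ℂ) (Ψ : PsiFam) : Prop :=
  ∀ (n : ℕ) (u : Fin (2*n+1) → ℂ) (i j : Fin (2*n+1)), (j : ℕ) = (i : ℕ) + 1 →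
    applyRc τ (u j - u i) i j (Ψ n u)
      = fun α => rv τ (u j - u i) * Ψ n (fun l => u (Equiv.swap i j l)) α

/-- (P2): local spin flips. -/
def PsiP2 (τ : ℂ) (Ψ : PsiFam) : Prop :=
  ∀ (n : ℕ) (u : Fin (2*n+1) → ℂ) (i : Fin (2*n+1)) (α : Fin (2*n+1) → Fin 2),
    Ψ n u (Function.update α i (flipS (α i)))
      = (-(pnome τ)) ^ n * Complex.exp (-Complex.I * ∑ j, (u j - u i))
        * Ψ n (Function.update u i (u i + Real.pi * τ)) α

/-- (P3): quasi-periodicity of `Ψ_n` in each `u_i`. -/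
def PsiP3 (τ : ℂ) (Ψ : PsiFam) : Prop :=
  ∀ (n : ℕ) (u : Fin (2*n+1) → ℂ) (i : Fin (2*n+1)),
    (Ψ n (Function.update u i (u i + Real.pi))
      = fun α => (∏ j ∈ Finset.univ.erase i, (if α j = 0 then (1:ℂ) else -1)) * Ψ n u α) ∧
    (Ψ n (Function.update u i (u i + 2 * Real.pi * τ))
      = fun α => (pnome τ ^ (4*n))⁻¹ *
          Complex.exp (-2 * Complex.I * ∑ j, (u i - u j)) * Ψ n u α)

/-- (P4): the wheel condition. -/
def PsiP4 (Ψ : PsiFam) : Prop :=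
  ∀ (n : ℕ) (u : Fin (2*n+1) → ℂ),
    (∃ i j k : Fin (2*n+1), i < j ∧ j < k ∧ u j = u i + 2*ηc ∧ u k = u i + 4*ηc) →
    Ψ n u = 0

/-- (P5): the reduction relations. -/
def PsiP5 (τ : ℂ) (Ψ : PsiFam) : Prop :=
  ∀ (n : ℕ) (u : Fin (2*(n+1)+1) → ℂ) (i : ℕ) (hi : i + 1 < 2*(n+1)+1),
    u ⟨i+1, hi⟩ = u ⟨i, by omega⟩ + 2*ηc →
    Ψ (n+1) u = fun α =>
      (∏ j ∈ (Finset.univ.erase (⟨i, by omega⟩ : Fin (2*(n+1)+1))).erase ⟨i+1, hi⟩,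
          th1 (u ⟨i, by omega⟩ - u j - 2*ηc) τ)
        * singletC (α ⟨i, by omega⟩) (α ⟨i+1, hi⟩)
        * Ψ n (delTwo i u) (delTwo i α)

/-- (P6): `Ψ₀ = ↑ + ↓`. -/
def PsiP6 (Ψ : PsiFam) : Prop := ∀ u α, Ψ 0 u α = 1

/-- The inhomogeneity parameters `(x₁,−x₁,…,x_n,−x_n,0)`. -/
def interleave {n : ℕ} (x : Fin n → ℂ) : Fin (2*n+1) → ℂ := fun j =>
  if h : (j : ℕ) < 2*n then
    (if (j : ℕ) % 2 = 0 then x ⟨(j:ℕ)/2, by omega⟩ else -x ⟨(j:ℕ)/2, by omega⟩)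
  else 0

/-- Components of `χ(x)`. -/
def chiC (τ lam x : ℂ) (s t : Fin 2) : ℂ :=
  if s = 0 ∧ t = 1 then th1 (x + lam) (2*τ) * th4 (x - lam - 2*ηc) (2*τ)
  else if s = 1 ∧ t = 0 then th1 (x - lam - 2*ηc) (2*τ) * th4 (x + lam) (2*τ)
  else 0

/-- Components of `χ̄(x)`. -/
def chibarC (τ lam x : ℂ) (s t : Fin 2) : ℂ :=
  if s = 0 ∧ t = 0 then th1 (x + lam) (2*τ) * th1 (x - lam - 2*ηc) (2*τ)
  else if s = 1 ∧ t = 1 then th4 (x - lam - 2*ηc) (2*τ) * th4 (x + lam) (2*τ)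
  else 0

/-- The scalar product `Z_n(x₁,…,x_n) = ⟨ξ_n(x₁,…,x_n), Ψ_n(x₁,−x₁,…,x_n,−x_n,0)⟩`. -/
def Zfun (τ lam : ℂ) (Ψ : PsiFam) (n : ℕ) (x : Fin n → ℂ) : ℂ :=
  ∑ α : Fin (2*n+1) → Fin 2,
    (∏ m : Fin n, chiC τ lam (x m)
        (α ⟨2*(m:ℕ), by have := m.2; omega⟩) (α ⟨2*(m:ℕ)+1, by have := m.2; omega⟩))
      * (if α ⟨2*n, by omega⟩ = 0 then (1:ℂ) else 0)
      * Ψ n (interleave x) α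

/-- The scalar product `Z̄_n^±(x₁,…,x_n)`, with `ε = ±1`. -/
def Zbarfun (τ lam ε : ℂ) (Ψ : PsiFam) (n : ℕ) (x : Fin n → ℂ) : ℂ :=
  ∑ α : Fin (2*n+1) → Fin 2,
    (∏ m : Fin n, chibarC τ lam (x m)
        (α ⟨2*(m:ℕ), by have := m.2; omega⟩) (α ⟨2*(m:ℕ)+1, by have := m.2; omega⟩))
      * (if α ⟨2*n, by omega⟩ = 0 then (1:ℂ) else ε)
      * Ψ n (interleave x) α

/-- The normalisation constant `𝒩_n`. -/
def Ncoef (τ : ℂ) (n : ℕ) : ℂ :=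
  (-1 : ℂ) ^ ((n+1)/2) * (th1 ηc τ ^ (n^2))⁻¹ * (th4 0 (2*τ) / th4 ηc (2*τ)) ^ (n*(n+1)/2)

/-- The vector `ψ_n = 𝒩_n Ψ_n(0,…,0)`. -/
def psiH (τ : ℂ) (Ψ : PsiFam) (n : ℕ) (α : Fin (2*n+1) → Fin 2) : ℂ :=
  Ncoef τ n * Ψ n (fun _ => 0) α

/-- The scalar product `S_n(μ) = ((⟨↑↓| + μ⟨↓↑|)^{⊗n} ⊗ ⟨↑|) ψ_n`. -/
def Sfun (τ : ℂ) (Ψ : PsiFam) (n : ℕ) (μ : ℂ) : ℂ :=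
  ∑ α : Fin (2*n+1) → Fin 2,
    (∏ m : Fin n,
      (if α ⟨2*(m:ℕ), by have := m.2; omega⟩ = 0 ∧ α ⟨2*(m:ℕ)+1, by have := m.2; omega⟩ = 1
        then (1:ℂ)
       else if α ⟨2*(m:ℕ), by have := m.2; omega⟩ = 1 ∧ α ⟨2*(m:ℕ)+1, by have := m.2; omega⟩ = 0
        then μ
       else 0))
      * (if α ⟨2*n, by omega⟩ = 0 then (1:ℂ) else 0) * psiH τ Ψ n α

/-- The scalar product `S̄_n^±(ν) = ((⟨↑↑| + ν⟨↓↓|)^{⊗n} ⊗ (⟨↑| ± ⟨↓|)) ψ_n`, with `ε = ±1`. -/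
def Sbarfun (τ ε : ℂ) (Ψ : PsiFam) (n : ℕ) (ν : ℂ) : ℂ :=
  ∑ α : Fin (2*n+1) → Fin 2,
    (∏ m : Fin n,
      (if α ⟨2*(m:ℕ), by have := m.2; omega⟩ = 0 ∧ α ⟨2*(m:ℕ)+1, by have := m.2; omega⟩ = 0
        then (1:ℂ)
       else if α ⟨2*(m:ℕ), by have := m.2; omega⟩ = 1 ∧ α ⟨2*(m:ℕ)+1, by have := m.2; omega⟩ = 1
        then ν
       else 0))
      * (if α ⟨2*n, by omega⟩ = 0 then (1:ℂ) else ε) * psiH τ Ψ n α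

/-- The alternating spin configuration `↑↓↑↓⋯↑`. -/
def altConf {L : ℕ} : Fin L → Fin 2 := fun j => if (j : ℕ) % 2 = 0 then 0 else 1

/-- The fully polarised spin configuration `↓⋯↓`. -/
def downConf {L : ℕ} : Fin L → Fin 2 := fun _ => 1

/-- The spin configuration `↑⋯↑↓` with a single `↓` at the last site. -/
def lastDownConf {n : ℕ} : Fin (2*n+1) → Fin 2 := fun j => if (j : ℕ) = 2*n then 1 else 0

/-- `J₂ = −1/2`. -/
def J2c : ℂ := -(1/2)
/-- `J₃ = 1/(1+ζ)`. -/
def J3c (ζ : ℂ) : ℂ := 1/(1+ζ)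
/-- `J₄ = 1/(1−ζ)`. -/
def J4c (ζ : ℂ) : ℂ := 1/(1-ζ)
/-- `μ̄ = (μ−1)²/((ζ²−1)μ)`. -/
def mubar (ζ μ : ℂ) : ℂ := (μ - 1)^2 / ((ζ^2 - 1)*μ)
/-- `ν̄ = (ν−ζ)(νζ−1)/((ζ²−1)ν)`. -/
def nubar (ζ ν : ℂ) : ℂ := (ν - ζ)*(ν*ζ - 1) / ((ζ^2 - 1)*ν)

/-- The elliptic function `w(x)`. -/
def wfun (τ x : ℂ) : ℂ :=
  th4 ηc (2*τ) / th4 0 (2*τ) * th1 x τ ^ 2 / (th1 (x - ηc) τ * th1 (x + ηc) τ)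

/-- `β₂ = η + π/2`. -/
def β2c : ℂ := ηc + (Real.pi : ℂ)/2
/-- `β₃ = η + π/2 + πτ/2`. -/
def β3c (τ : ℂ) : ℂ := ηc + (Real.pi : ℂ)/2 + (Real.pi : ℂ)*τ/2
/-- `β₄ = η + πτ/2`. -/
def β4c (τ : ℂ) : ℂ := ηc + (Real.pi : ℂ)*τ/2

/-- `f` is an (even) theta function of degree `m`, nome `p = e^{iπτ}` and norm `0`
with respect to each of its variables. -/
def ThetaLike (τ : ℂ) (m : ℕ) {n : ℕ} (X : (Fin n → ℂ) → ℂ) : Prop :=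
  ∀ (x : Fin n → ℂ) (i : Fin n),
    Differentiable ℂ (fun z => X (Function.update x i z)) ∧
    (∀ z, X (Function.update x i (z + Real.pi)) = X (Function.update x i z)) ∧
    (∀ z, X (Function.update x i (z + Real.pi * τ))
        = ((-(pnome τ)) ^ m)⁻¹ * Complex.exp (-2 * Complex.I * ((m : ℂ) * z))
            * X (Function.update x i z)) ∧
    (∀ z, X (Function.update x i (-z)) = X (Function.update x i z))

/-!
Let `g` be `ϑ₁(2(η + z), p²)` or `ϑ₄(2(η + z), p²)`. Applying `Ř(-2x)` to one pair `(x, -x)` and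
using (P1) gives `g(z) Z(-z) = g(-z) Z(z)` in each variable `z`. As `g(z)` and `g(-z)` have no
common zero, `g` divides `Z` and the quotient is even. The wheel condition supplies the further
zeros `±η` of `Z_n`, and (P2), (P3) fix the degree and the norm of what remains. The variables can
be treated one after the other because a theta function of degree `m` vanishes identically once it
vanishes at `m + 1` points which are pairwise inequivalent modulo the lattice: interpolating at
such points divides out the factor of one variable while keeping the slices in all the others in
their spaces of theta functions. Two neighbouring pairs `(x₁, -x₁)`, `(x₂, -x₂)` are exchanged by
four `Ř`-matrices. The boundary vectors `χ` and `χ̄` are compatible with this exchange, which is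
the symmetry. All identities between theta functions come from the product formulas for
`ϑ₃(u) ϑ₄(v)` and `ϑ₁(u) ϑ₂(v)`, which reduce to products of theta functions of nome `p²`.
-/

/-! ### Jacobi theta functions -/

theorem neg_one_zpow_eq_exp (n : ℤ) : (-1 : ℂ) ^ n = exp (n * (Real.pi * I)) := by
  rw [exp_int_mul, exp_pi_mul_I]

theorem th3_eq_jacobiTheta₂ (z τ : ℂ) : th3 z τ = jacobiTheta₂ (z / Real.pi) τ := by
  refine tsum_congr fun n => congrArg exp ?_
  field_simp
  ring

theorem th4_eq_jacobiTheta₂ (z τ : ℂ) : th4 z τ = jacobiTheta₂ (z / Real.pi + 1 / 2) τ := by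
  refine tsum_congr fun n => ?_
  rw [neg_one_zpow_eq_exp, ← exp_add]
  refine congrArg exp ?_
  field_simp
  ring

theorem th2_eq_exp_mul_th3 (z τ : ℂ) :
    th2 z τ = exp (Real.pi * I * τ / 4 + I * z) * th3 (z + Real.pi * τ / 2) τ := by
  simp only [th2, th3, ← tsum_mul_left, ← exp_add]
  refine tsum_congr fun n => congrArg exp ?_
  ring

theorem th1_eq_exp_mul_th4 (z τ : ℂ) :
    th1 z τ = -I * exp (Real.pi * I * τ / 4 + I * z) * th4 (z + Real.pi * τ / 2) τ := by
  rw [th1, th4, mul_assoc (-I)]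
  refine congrArg (-I * ·) ?_
  rw [← tsum_mul_left]
  refine tsum_congr fun n => ?_
  rw [mul_left_comm, ← exp_add]
  congr 2
  ring

theorem th2_eq_th1 (z τ : ℂ) : th2 z τ = th1 (z + Real.pi / 2) τ := by
  rw [th1, th2, ← tsum_mul_left]
  refine tsum_congr fun n => ?_
  have hI : -I = exp (-(Real.pi / 2 * I)) := by rw [exp_neg, exp_pi_div_two_mul_I, inv_I]
  rw [neg_one_zpow_eq_exp, hI, ← exp_add, ← exp_add, exp_eq_exp_iff_exists_int]
  exact ⟨-n, by push_cast; ring⟩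

theorem differentiable_th4 {τ : ℂ} (hτ : 0 < τ.im) : Differentiable ℂ fun z => th4 z τ := by
  simp only [th4_eq_jacobiTheta₂]
  exact fun z => (differentiableAt_jacobiTheta₂_fst _ hτ).comp z (by fun_prop)

theorem differentiable_th1 {τ : ℂ} (hτ : 0 < τ.im) : Differentiable ℂ fun z => th1 z τ := by
  simp only [th1_eq_exp_mul_th4]
  exact .mul (by fun_prop) ((differentiable_th4 hτ).comp (by fun_prop))

theorem th4_add_pi (z τ : ℂ) : th4 (z + Real.pi) τ = th4 z τ := by
  rw [th4_eq_jacobiTheta₂, th4_eq_jacobiTheta₂, ← jacobiTheta₂_add_left (z / Real.pi + 1 / 2)]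
  congr 1
  field_simp
  ring

theorem th4_add_pi_mul (z τ : ℂ) :
    th4 (z + Real.pi * τ) τ = -exp (-I * (Real.pi * τ + 2 * z)) * th4 z τ := by
  have harg : (z + Real.pi * τ) / Real.pi + 1 / 2 = z / Real.pi + 1 / 2 + τ := by
    field_simp
    ring
  have hexp : -Real.pi * I * (τ + 2 * (z / Real.pi + 1 / 2))
      = -I * (Real.pi * τ + 2 * z) - Real.pi * I := by
    field_simp
    ring
  rw [th4_eq_jacobiTheta₂, th4_eq_jacobiTheta₂, harg, jacobiTheta₂_add_left', hexp, exp_sub,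
    exp_pi_mul_I, div_neg, div_one]

theorem th4_neg (z τ : ℂ) : th4 (-z) τ = th4 z τ := by
  rw [th4_eq_jacobiTheta₂, th4_eq_jacobiTheta₂, ← jacobiTheta₂_neg_left, ← jacobiTheta₂_add_left]
  congr 1
  ring

theorem th3_neg (z τ : ℂ) : th3 (-z) τ = th3 z τ := by
  rw [th3_eq_jacobiTheta₂, th3_eq_jacobiTheta₂, ← jacobiTheta₂_neg_left, neg_div, neg_neg]

theorem th1_add_pi (z τ : ℂ) : th1 (z + Real.pi) τ = -th1 z τ := by
  rw [th1_eq_exp_mul_th4, th1_eq_exp_mul_th4, add_right_comm, th4_add_pi, mul_add,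
    ← add_assoc, exp_add _ (I * Real.pi), mul_comm I (Real.pi : ℂ), exp_pi_mul_I]
  ring

theorem th1_add_pi_mul (z τ : ℂ) :
    th1 (z + Real.pi * τ) τ = -exp (-I * (Real.pi * τ + 2 * z)) * th1 z τ := by
  have hexp : exp (Real.pi * I * τ / 4 + I * (z + Real.pi * τ))
        * exp (-I * (Real.pi * τ + 2 * (z + Real.pi * τ / 2)))
      = exp (-I * (Real.pi * τ + 2 * z)) * exp (Real.pi * I * τ / 4 + I * z) := by
    rw [← exp_add, ← exp_add]
    ring_nf
  rw [th1_eq_exp_mul_th4, th1_eq_exp_mul_th4, add_right_comm, th4_add_pi_mul]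
  linear_combination I * th4 (z + Real.pi * τ / 2) τ * hexp

theorem th1_neg (z τ : ℂ) : th1 (-z) τ = -th1 z τ := by
  have hexp : exp (Real.pi * I * τ / 4 + I * z)
        * exp (-I * (Real.pi * τ + 2 * (z - Real.pi * τ / 2)))
      = exp (Real.pi * I * τ / 4 + I * -z) := by
    rw [← exp_add]
    ring_nf
  rw [th1_eq_exp_mul_th4, th1_eq_exp_mul_th4 z, ← th4_neg,
    show -(-z + Real.pi * τ / 2) = z - Real.pi * τ / 2 by ring,
    show z + Real.pi * τ / 2 = z - Real.pi * τ / 2 + Real.pi * τ by ring, th4_add_pi_mul]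
  linear_combination I * th4 (z - Real.pi * τ / 2) τ * hexp

theorem th1_zero (τ : ℂ) : th1 0 τ = 0 := by
  rw [← self_eq_neg, ← th1_neg, neg_zero]

theorem th2_neg (z τ : ℂ) : th2 (-z) τ = th2 z τ := by
  rw [th2_eq_th1, th2_eq_th1, show z + Real.pi / 2 = -(-z + Real.pi / 2) + Real.pi by ring,
    th1_add_pi, th1_neg, neg_neg]

theorem th4_add_half (z τ : ℂ) :
    th4 (z + Real.pi * τ) (2 * τ) = I * exp (-I * (Real.pi * τ / 2 + z)) * th1 z (2 * τ) := by
  have hexp : exp (-I * (Real.pi * τ / 2 + z)) * exp (Real.pi * I * (2 * τ) / 4 + I * z) = 1 := by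
    rw [← exp_add, ← exp_zero]
    ring_nf
  rw [th1_eq_exp_mul_th4, show z + Real.pi * (2 * τ) / 2 = z + Real.pi * τ by ring]
  linear_combination (-th4 (z + Real.pi * τ) (2 * τ)) * hexp
    + th4 (z + Real.pi * τ) (2 * τ) * exp (-I * (Real.pi * τ / 2 + z))
      * exp (Real.pi * I * (2 * τ) / 4 + I * z) * I_sq

theorem th1_add_half (z τ : ℂ) :
    th1 (z + Real.pi * τ) (2 * τ) = I * exp (-I * (Real.pi * τ / 2 + z)) * th4 z (2 * τ) := by
  have hexp : exp (Real.pi * I * (2 * τ) / 4 + I * (z + Real.pi * τ))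
      * exp (-I * (Real.pi * (2 * τ) + 2 * z)) = exp (-I * (Real.pi * τ / 2 + z)) := by
    rw [← exp_add]
    ring_nf
  rw [th1_eq_exp_mul_th4,
    show z + Real.pi * τ + Real.pi * (2 * τ) / 2 = z + Real.pi * (2 * τ) by ring, th4_add_pi_mul]
  linear_combination I * th4 z (2 * τ) * hexp

/-! ### Doubling of the period -/

/-- Splitting of `ℤ × ℤ` according to the parity of the sum of the coordinates; it diagonalises
the quadratic form `m² + n²` in the product of two theta series. -/
def intProdParityEquiv : (ℤ × ℤ) ⊕ (ℤ × ℤ) ≃ ℤ × ℤ where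
  toFun s := s.elim (fun q => (q.1 + q.2, q.1 - q.2)) (fun q => (q.1 + q.2 + 1, q.1 - q.2))
  invFun q := if (q.1 + q.2) % 2 = 0 then .inl ((q.1 + q.2) / 2, (q.1 - q.2) / 2)
    else .inr ((q.1 + q.2) / 2, (q.1 - q.2) / 2)
  left_inv s := by rcases s with ⟨a, b⟩ | ⟨a, b⟩ <;> grind
  right_inv q := by grind

theorem hasSum_prod_mul {ι κ : Type*} {f : ι → ℂ} {g : κ → ℂ} {a b : ℂ} (hf : HasSum f a)
    (hg : HasSum g b) : HasSum (fun q : ι × κ => f q.1 * g q.2) (a * b) :=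
  hf.mul hg (summable_mul_of_summable_norm hf.summable.norm hg.summable.norm)

theorem hasSum_jacobiTheta₂_term_mul (u v : ℂ) {τ : ℂ} (hτ : 0 < τ.im) :
    HasSum (fun q : ℤ × ℤ => jacobiTheta₂_term q.1 u τ * jacobiTheta₂_term q.2 v τ)
      (jacobiTheta₂ u τ * jacobiTheta₂ v τ) :=
  hasSum_prod_mul (f := (jacobiTheta₂_term · u τ)) (g := (jacobiTheta₂_term · v τ))
    (hasSum_jacobiTheta₂_term u hτ) (hasSum_jacobiTheta₂_term v hτ)

theorem jacobiTheta₂_mul_jacobiTheta₂ (u v : ℂ) {τ : ℂ} (hτ : 0 < τ.im) :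
    jacobiTheta₂ u τ * jacobiTheta₂ v τ
      = jacobiTheta₂ (u + v) (2 * τ) * jacobiTheta₂ (u - v) (2 * τ)
        + exp (Real.pi * I * τ + 2 * Real.pi * I * u)
          * (jacobiTheta₂ (u + v + τ) (2 * τ) * jacobiTheta₂ (u - v + τ) (2 * τ)) := by
  have h2τ : 0 < (2 * τ).im := by simpa using hτ
  have hsum := (Equiv.hasSum_iff intProdParityEquiv).2 (hasSum_jacobiTheta₂_term_mul u v hτ)
  refine hsum.unique (HasSum.sum ?_ ?_)
  · refine (hasSum_jacobiTheta₂_term_mul (u + v) (u - v) h2τ).congr_fun fun q => ?_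
    simp only [Function.comp, intProdParityEquiv, Equiv.coe_fn_mk, Sum.elim_inl,
      jacobiTheta₂_term, ← exp_add]
    push_cast
    ring_nf
  · refine ((hasSum_jacobiTheta₂_term_mul (u + v + τ) (u - v + τ) h2τ).mul_left
      (exp (Real.pi * I * τ + 2 * Real.pi * I * u))).congr_fun fun q => ?_
    simp only [Function.comp, intProdParityEquiv, Equiv.coe_fn_mk, Sum.elim_inr,
      jacobiTheta₂_term, ← exp_add]
    push_cast
    ring_nf

theorem th3_mul_th4 (u v : ℂ) {τ : ℂ} (hτ : 0 < τ.im) :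
    th3 u τ * th4 v τ = th4 (u + v) (2 * τ) * th4 (u - v) (2 * τ)
      - th1 (u + v) (2 * τ) * th1 (u - v) (2 * τ) := by
  have hexp : exp (Real.pi * I * τ + 2 * Real.pi * I * (u / Real.pi))
      = exp (Real.pi * I * (2 * τ) / 4 + I * (u + v))
        * exp (Real.pi * I * (2 * τ) / 4 + I * (u - v)) := by
    rw [← exp_add]
    congr 1
    field_simp
    ring
  have hplus : u / Real.pi + (v / Real.pi + 1 / 2) = (u + v) / Real.pi + 1 / 2 := by ring
  have hminus : u / Real.pi - (v / Real.pi + 1 / 2) + 1 = (u - v) / Real.pi + 1 / 2 := by ring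
  have hhalf (w : ℂ) : (w + Real.pi * (2 * τ) / 2) / Real.pi + 1 / 2
      = w / Real.pi + 1 / 2 + τ := by
    field_simp
    ring
  rw [th1_eq_exp_mul_th4, th1_eq_exp_mul_th4]
  simp only [th3_eq_jacobiTheta₂, th4_eq_jacobiTheta₂, hhalf]
  rw [jacobiTheta₂_mul_jacobiTheta₂ _ _ hτ, hexp,
    ← jacobiTheta₂_add_left (u / Real.pi - (v / Real.pi + 1 / 2)),
    ← jacobiTheta₂_add_left (u / Real.pi - (v / Real.pi + 1 / 2) + τ), add_right_comm _ τ 1,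
    hplus, hminus]
  linear_combination (exp (Real.pi * I * (2 * τ) / 4 + I * (u + v))
    * exp (Real.pi * I * (2 * τ) / 4 + I * (u - v))
    * jacobiTheta₂ ((u + v) / Real.pi + 1 / 2 + τ) (2 * τ)
    * jacobiTheta₂ ((u - v) / Real.pi + 1 / 2 + τ) (2 * τ)) * I_sq

theorem th1_mul_th2 (u v : ℂ) {τ : ℂ} (hτ : 0 < τ.im) :
    th1 u τ * th2 v τ = th1 (u + v) (2 * τ) * th4 (u - v) (2 * τ)
      + th4 (u + v) (2 * τ) * th1 (u - v) (2 * τ) := by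
  have hexp : exp (Real.pi * I * τ / 4 + I * u) * exp (Real.pi * I * τ / 4 + I * v)
      * exp (-I * (Real.pi * τ / 2 + (u + v))) = 1 := by
    rw [← exp_add, ← exp_add, ← exp_zero]
    ring_nf
  have h := th3_mul_th4 (v + Real.pi * τ / 2) (u + Real.pi * τ / 2) hτ
  rw [show v + Real.pi * τ / 2 + (u + Real.pi * τ / 2) = u + v + Real.pi * τ by ring,
    show v + Real.pi * τ / 2 - (u + Real.pi * τ / 2) = -(u - v) by ring,
    th4_add_half, th1_add_half, th4_neg, th1_neg] at h
  rw [th1_eq_exp_mul_th4, th2_eq_exp_mul_th3]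
  linear_combination
    (-I * exp (Real.pi * I * τ / 4 + I * u) * exp (Real.pi * I * τ / 4 + I * v)) * h
    + (th1 (u + v) (2 * τ) * th4 (u - v) (2 * τ) + th4 (u + v) (2 * τ) * th1 (u - v) (2 * τ))
      * (hexp - exp (Real.pi * I * τ / 4 + I * u) * exp (Real.pi * I * τ / 4 + I * v)
      * exp (-I * (Real.pi * τ / 2 + (u + v))) * I_sq)

/-! ### Entire functions -/

theorem exists_mul_ne_zero_of_entire {f g : ℂ → ℂ} (hf : Differentiable ℂ f)
    (hg : Differentiable ℂ g) (hf0 : ∃ z, f z ≠ 0) (hg0 : ∃ z, g z ≠ 0) : ∃ z, f z * g z ≠ 0 := by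
  contrapose! hf0
  have h := AnalyticOnNhd.eq_zero_or_eq_zero_of_mul_eq_zero (fun z _ => hf.analyticAt z)
    (fun z _ => hg.analyticAt z) (fun z _ => hf0 z) isPreconnected_univ
  obtain ⟨w, hw⟩ := hg0
  exact fun z => (h.resolve_right fun hz => hw (hz w trivial)) z trivial

theorem eq_of_entire_mul_left_eq {f g h : ℂ → ℂ} (hf : Differentiable ℂ f)
    (hg : Differentiable ℂ g) (hh : Differentiable ℂ h) (hf0 : ∃ z, f z ≠ 0)
    (heq : ∀ z, f z * g z = f z * h z) (z : ℂ) : g z = h z := by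
  by_contra hne
  obtain ⟨w, hw⟩ := exists_mul_ne_zero_of_entire hf (hg.sub hh) hf0 ⟨z, sub_ne_zero.2 hne⟩
  exact hw (by rw [Pi.sub_apply, mul_sub, heq, sub_self])

theorem eq_zero_of_wronskian_eq_zero {a b : ℂ → ℂ} (ha : Differentiable ℂ a)
    (hb : Differentiable ℂ b) (hW : ∀ z, deriv a z * b z = a z * deriv b z) {c : ℂ}
    (hac : a c = 0) (hbc : b c ≠ 0) : a = 0 := by
  obtain ⟨ε, hε, hball⟩ := Metric.eventually_nhds_iff_ball.1
    (hb.continuous.continuousAt.eventually_ne hbc)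
  have hconst : ∀ z ∈ Metric.ball c ε, (a / b) z = (a / b) c := fun z hz =>
    Metric.isOpen_ball.is_const_of_deriv_eq_zero (convex_ball c ε).isPreconnected
      (fun w hw => ((ha w).div (hb w) (hball w hw)).differentiableWithinAt)
      (fun w hw => by rw [deriv_div (ha w) (hb w) (hball w hw), hW, sub_self, zero_div]; rfl)
      hz (Metric.mem_ball_self hε)
  refine AnalyticOnNhd.eq_of_eventuallyEq (fun z _ => ha.analyticAt z)
    (fun z _ => analyticAt_const) (z₀ := c) ?_
  filter_upwards [Metric.ball_mem_nhds c hε] with z hz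
  have := hconst z hz
  rw [Pi.div_apply, Pi.div_apply, hac, zero_div, div_eq_zero_iff] at this
  exact this.resolve_right (hball z hz)

theorem differentiable_dslope {f : ℂ → ℂ} (hf : Differentiable ℂ f) (c : ℂ) :
    Differentiable ℂ (dslope f c) := by
  rw [← differentiableOn_univ] at hf ⊢
  exact (Complex.differentiableOn_dslope Filter.univ_mem).2 hf

theorem sub_mul_dslope_of_eq_zero {f : ℂ → ℂ} {c : ℂ} (hc : f c = 0) (z : ℂ) :
    (z - c) * dslope f c z = f z := by
  rw [← smul_eq_mul, sub_smul_dslope, hc, sub_zero]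

theorem exists_entire_quotient {f g : ℂ → ℂ} (hf : Differentiable ℂ f) (hg : Differentiable ℂ g)
    (hfg : ∀ z, g z = 0 → f z = 0) (hsimple : ∀ z, g z = 0 → deriv g z ≠ 0) :
    ∃ h : ℂ → ℂ, Differentiable ℂ h ∧ ∀ z, f z = g z * h z := by
  classical
  refine ⟨fun z => if g z = 0 then deriv f z / deriv g z else f z / g z, fun c => ?_, fun z => ?_⟩
  · by_cases hc : g c = 0
    · have hc' : dslope g c c ≠ 0 := by rw [dslope_same]; exact hsimple c hc
      refine ((differentiable_dslope hf c c).div (differentiable_dslope hg c c)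
        hc').congr_of_eventuallyEq ?_
      filter_upwards [(differentiable_dslope hg c).continuous.continuousAt.eventually_ne hc']
        with z hz
      rcases eq_or_ne z c with rfl | hzc
      · simp [hc]
      · have hzc' : z - c ≠ 0 := sub_ne_zero.2 hzc
        rw [Pi.div_apply, ← sub_mul_dslope_of_eq_zero hc z,
          ← sub_mul_dslope_of_eq_zero (hfg c hc) z, if_neg (mul_ne_zero hzc' hz),
          mul_div_mul_left _ _ hzc']
    · refine ((hf c).div (hg c) hc).congr_of_eventuallyEq ?_
      filter_upwards [hg.continuous.continuousAt.eventually_ne hc] with z hz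
      exact if_neg hz
  · by_cases hz : g z = 0
    · rw [hfg z hz, hz, zero_mul]
    · simp only [hz, if_false]
      rw [mul_div_cancel₀ _ hz]

theorem exists_even_entire_quotient {f g : ℂ → ℂ} (hf : Differentiable ℂ f)
    (hg : Differentiable ℂ g) (hg0 : ∀ z, g z = 0 → g (-z) ≠ 0)
    (hfg : ∀ z, g z * f (-z) = g (-z) * f z) :
    ∃ h : ℂ → ℂ, Differentiable ℂ h ∧ (∀ z, h (-z) = h z) ∧ ∀ z, f z = g z * h z := by
  classical
  set h : ℂ → ℂ := fun z => if g z = 0 then f (-z) / g (-z) else f z / g z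
  have hleft (z : ℂ) (hz : g z ≠ 0) : h z = f z / g z := if_neg hz
  have hright (z : ℂ) (hz : g (-z) ≠ 0) : h z = f (-z) / g (-z) := by
    by_cases hz' : g z = 0
    · exact if_pos hz'
    · rw [hleft z hz', div_eq_div_iff hz' hz]
      linear_combination -hfg z
  refine ⟨h, fun c => ?_, fun z => ?_, fun z => ?_⟩
  · by_cases hc : g c = 0
    · have hg' : Differentiable ℂ fun z => g (-z) := hg.comp differentiable_neg
      have hf' : Differentiable ℂ fun z => f (-z) := hf.comp differentiable_neg
      refine ((hf' c).div (hg' c) (hg0 c hc)).congr_of_eventuallyEq ?_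
      filter_upwards [hg'.continuous.continuousAt.eventually_ne (hg0 c hc)] with z hz
      exact hright z hz
    · refine ((hf c).div (hg c) hc).congr_of_eventuallyEq ?_
      filter_upwards [hg.continuous.continuousAt.eventually_ne hc] with z hz
      exact hleft z hz
  · by_cases hz : g z = 0
    · rw [hleft _ (hg0 z hz), hright _ (hg0 z hz)]
    · rw [hright _ (by rwa [neg_neg]), neg_neg, hleft z hz]
  · by_cases hz : g z = 0
    · have := hfg z
      rw [hz, zero_mul, eq_comm, mul_eq_zero] at this
      rw [hz, zero_mul, this.resolve_left (hg0 z hz)]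
    · rw [hleft z hz, mul_div_cancel₀ _ hz]

theorem exists_real_combination {τ : ℂ} (hτ : 0 < τ.im) (z : ℂ) :
    ∃ s t : ℝ, z = s * Real.pi + t * (Real.pi * τ) := by
  have him : Real.pi * τ.im ≠ 0 := mul_ne_zero Real.pi_ne_zero hτ.ne'
  obtain ⟨t, ht⟩ : ∃ t : ℝ, t * (Real.pi * τ.im) = z.im := ⟨_, div_mul_cancel₀ _ him⟩
  obtain ⟨s, hs⟩ : ∃ s : ℝ, s * Real.pi = z.re - t * (Real.pi * τ.re) :=
    ⟨_, div_mul_cancel₀ _ Real.pi_ne_zero⟩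
  refine ⟨s, t, Complex.ext ?_ ?_⟩
  · simpa using (sub_eq_iff_eq_add.1 hs.symm)
  · simpa using ht.symm

theorem apply_eq_apply_of_norm_periodic {τ : ℂ} (hτ : 0 < τ.im) {f : ℂ → ℂ}
    (hf : Differentiable ℂ f) (h₁ : Function.Periodic (fun z => ‖f z‖) Real.pi)
    (h₂ : Function.Periodic (fun z => ‖f z‖) (Real.pi * τ)) (z w : ℂ) : f z = f w := by
  have hcont : Continuous fun q : ℝ × ℝ => f (q.1 * Real.pi + q.2 * (Real.pi * τ)) :=
    hf.continuous.comp (by fun_prop)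
  obtain ⟨C, hC⟩ := ((isCompact_Icc (a := (0 : ℝ)) (b := 1)).prod
    (isCompact_Icc (a := (0 : ℝ)) (b := 1))).exists_bound_of_continuousOn hcont.continuousOn
  refine hf.apply_eq_apply_of_bounded (isBounded_iff_forall_norm_le.2 ⟨C, ?_⟩) z w
  rintro _ ⟨z, rfl⟩
  obtain ⟨s, t, rfl⟩ := exists_real_combination hτ z
  have hfract : s * Real.pi + t * (Real.pi * τ) - ⌊s⌋ • (Real.pi : ℂ) - ⌊t⌋ • (Real.pi * τ)
      = (Int.fract s : ℝ) * Real.pi + (Int.fract t : ℝ) * (Real.pi * τ) := by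
    rw [Int.fract, Int.fract, zsmul_eq_mul, zsmul_eq_mul]
    push_cast
    ring
  have hbound := hC (Int.fract s, Int.fract t)
    ⟨⟨Int.fract_nonneg s, (Int.fract_lt_one s).le⟩, ⟨Int.fract_nonneg t, (Int.fract_lt_one t).le⟩⟩
  rw [← hfract] at hbound
  exact ((h₂.sub_zsmul_eq _).trans (h₁.sub_zsmul_eq _)).symm.trans_le hbound

/-! ### Quasi-periodic entire functions -/

/-- Entire functions with multipliers `a` under `z ↦ z + π` and `b e^{-2imz}` under
`z ↦ z + πτ`; the theta functions of degree `m` correspond to `a = (-1)^m`, and `b` carries the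
nome and the norm. -/
def thetaSpace (τ a b : ℂ) (m : ℕ) : Submodule ℂ (ℂ → ℂ) where
  carrier := {h | Differentiable ℂ h ∧ (∀ z, h (z + Real.pi) = a * h z) ∧
    ∀ z, h (z + Real.pi * τ) = b * exp (-2 * I * (m * z)) * h z}
  zero_mem' := ⟨differentiable_const 0, by simp, by simp⟩
  add_mem' hf hg := ⟨hf.1.add hg.1, fun z => by simp only [Pi.add_apply, hf.2.1, hg.2.1, mul_add],
    fun z => by simp only [Pi.add_apply, hf.2.2, hg.2.2, mul_add]⟩
  smul_mem' c f hf := ⟨hf.1.const_smul c,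
    fun z => by simp only [Pi.smul_apply, smul_eq_mul, hf.2.1, mul_left_comm],
    fun z => by simp only [Pi.smul_apply, smul_eq_mul, hf.2.2, mul_left_comm]⟩

theorem exists_real_combination_re {τ : ℂ} (hτ : 0 < τ.im) (x y : ℝ) :
    ∃ c : ℂ, (c * Real.pi).re = x ∧ (c * (Real.pi * τ)).re = y := by
  have hπ := Real.pi_ne_zero
  refine ⟨⟨x / Real.pi, (x * τ.re - y) / (Real.pi * τ.im)⟩, ?_, ?_⟩
  · simp [hπ]
  · simp only [mul_re, mul_im, ofReal_re, ofReal_im, zero_mul, sub_zero, add_zero]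
    field_simp
    ring

theorem exists_eq_mul_exp_of_mem_thetaSpace_zero {τ : ℂ} (hτ : 0 < τ.im) {a b : ℂ} (ha : a ≠ 0)
    (hb : b ≠ 0) {h : ℂ → ℂ} (hh : h ∈ thetaSpace τ a b 0) :
    ∃ k c : ℂ, ∀ z, h z = k * exp (c * z) := by
  obtain ⟨hd, hπ, hπτ⟩ := hh
  obtain ⟨c, hca, hcb⟩ := exists_real_combination_re hτ (Real.log ‖a‖) (Real.log ‖b‖)
  have hperiodic {w q : ℂ} (hq : q ≠ 0) (hw : ∀ z, h (z + w) = q * h z)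
      (hcw : (c * w).re = Real.log ‖q‖) :
      Function.Periodic (fun z => ‖exp (-(c * z)) * h z‖) w := fun z => by
    have hexp : ‖exp (c * w)‖ = ‖q‖ := by
      rw [norm_exp, hcw, Real.exp_log (norm_pos_iff.2 hq)]
    have hsplit : exp (-(c * z)) = exp (-(c * (z + w))) * exp (c * w) := by
      rw [← exp_add]
      ring_nf
    simp only [hw, hsplit, norm_mul, hexp, mul_assoc]
  have hconst := apply_eq_apply_of_norm_periodic hτ (f := fun z => exp (-(c * z)) * h z)
    (.mul (by fun_prop) hd) (hperiodic ha hπ hca) (hperiodic hb (by simpa using hπτ) hcb)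
  refine ⟨h 0, c, fun z => ?_⟩
  have hz := hconst z 0
  rw [exp_neg, mul_zero, neg_zero, exp_zero, one_mul, inv_mul_eq_iff_eq_mul₀ (exp_ne_zero _)] at hz
  rw [hz, mul_comm]

theorem eq_zero_of_mem_thetaSpace_zero {τ : ℂ} (hτ : 0 < τ.im) {a b : ℂ} (ha : a ≠ 0)
    (hb : b ≠ 0) {h : ℂ → ℂ} (hh : h ∈ thetaSpace τ a b 0) {t : ℂ} (ht : h t = 0) : h = 0 := by
  obtain ⟨k, c, hkc⟩ := exists_eq_mul_exp_of_mem_thetaSpace_zero hτ ha hb hh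
  rw [hkc, mul_eq_zero, or_iff_left (exp_ne_zero _)] at ht
  funext z
  rw [hkc, ht, zero_mul, Pi.zero_apply]

/-! ### Zeros of `ϑ₁` -/

theorem two_mul_im_pos {τ : ℂ} (hτ : 0 < τ.im) : 0 < (2 * τ).im := by
  simpa using hτ

theorem th4_zero_eq_jacobiTheta (τ : ℂ) : th4 0 τ = jacobiTheta (τ + 1) := by
  rw [th4, jacobiTheta]
  refine tsum_congr fun n => ?_
  obtain ⟨k, hk⟩ := (Int.even_mul_pred_self n).two_dvd
  have hk' : (n : ℂ) * (n - 1) = 2 * k := by exact_mod_cast hk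
  rw [neg_one_zpow_eq_exp, ← exp_add, exp_eq_exp_iff_exists_int]
  exact ⟨-k, by push_cast; linear_combination (-Real.pi * I) * hk'⟩

theorem th4_zero_two_pow_mul {τ : ℂ} (hτ : 0 < τ.im) (h0 : th4 0 τ = 0) (k : ℕ) :
    0 < (2 ^ k * τ).im ∧ th4 0 (2 ^ k * τ) = 0 := by
  induction k with
  | zero => simpa using ⟨hτ, h0⟩
  | succ k ih =>
    have hdouble := th3_mul_th4 0 0 ih.1
    rw [ih.2, mul_zero, add_zero, sub_zero, th1_zero, mul_zero, sub_zero, eq_comm,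
      mul_self_eq_zero] at hdouble
    rw [pow_succ', mul_assoc]
    exact ⟨two_mul_im_pos ih.1, hdouble⟩

theorem th4_zero_ne_zero {τ : ℂ} (hτ : 0 < τ.im) : th4 0 τ ≠ 0 := by
  intro h0
  have him (k : ℕ) : (2 ^ k * τ + 1).im = 2 ^ k * τ.im := by
    rw [add_im, one_im, add_zero, show (2 : ℂ) ^ k = ((2 ^ k : ℝ) : ℂ) by push_cast; rfl,
      im_ofReal_mul]
  have hseq : Filter.Tendsto (fun k : ℕ => (2 ^ k * τ + 1).im) Filter.atTop Filter.atTop := by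
    simp only [him]
    exact (tendsto_pow_atTop_atTop_of_one_lt one_lt_two).atTop_mul_const hτ
  have hexp : Filter.Tendsto (fun k : ℕ => Real.exp (-Real.pi * (2 ^ k * τ + 1).im))
      Filter.atTop (nhds 0) :=
    Real.tendsto_exp_atBot.comp (hseq.const_mul_atTop_of_neg (neg_neg_of_pos Real.pi_pos))
  have hlim := (isBigO_at_im_infty_jacobiTheta_sub_one.comp_tendsto
    (Filter.tendsto_comap_iff.2 hseq)).trans_tendsto hexp
  have hval (k : ℕ) : jacobiTheta (2 ^ k * τ + 1) - 1 = -1 := by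
    rw [← th4_zero_eq_jacobiTheta, (th4_zero_two_pow_mul hτ h0 k).2, zero_sub]
  simp only [Function.comp_def, hval, tendsto_const_nhds_iff, neg_eq_zero, one_ne_zero] at hlim

theorem exists_th1_ne_zero {τ : ℂ} (hτ : 0 < τ.im) : ∃ z, th1 z τ ≠ 0 := by
  refine ⟨-(Real.pi * τ / 2), ?_⟩
  rw [th1_eq_exp_mul_th4, neg_add_cancel]
  exact mul_ne_zero (mul_ne_zero (neg_ne_zero.2 I_ne_zero) (exp_ne_zero _)) (th4_zero_ne_zero hτ)

theorem exists_th2_ne_zero {τ : ℂ} (hτ : 0 < τ.im) : ∃ z, th2 z τ ≠ 0 := by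
  obtain ⟨z, hz⟩ := exists_th1_ne_zero hτ
  exact ⟨z - Real.pi / 2, by rwa [th2_eq_th1, sub_add_cancel]⟩

theorem differentiable_th2 {τ : ℂ} (hτ : 0 < τ.im) : Differentiable ℂ fun z => th2 z τ := by
  simp only [th2_eq_th1]
  exact (differentiable_th1 hτ).comp (by fun_prop)

theorem deriv_of_odd {f : ℂ → ℂ} (hf : ∀ z, f (-z) = -f z) (z : ℂ) :
    deriv f (-z) = deriv f z := by
  have h : -deriv f z = -deriv f (-z) := by
    simpa only [hf, deriv.fun_neg] using deriv_comp_neg f z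
  exact neg_injective h.symm

theorem deriv_of_even {f : ℂ → ℂ} (hf : ∀ z, f (-z) = f z) (z : ℂ) :
    deriv f (-z) = -deriv f z := by
  have h : deriv f z = -deriv f (-z) := by simpa only [hf] using deriv_comp_neg f z
  rw [h, neg_neg]

theorem deriv_th1_zero_mul_th2 {τ : ℂ} (hτ : 0 < τ.im) (v : ℂ) :
    deriv (th1 · τ) 0 * th2 v τ
      = 2 * (deriv (th1 · (2 * τ)) v * th4 v (2 * τ)
        - th1 v (2 * τ) * deriv (th4 · (2 * τ)) v) := by
  set a : ℂ → ℂ := (th1 · (2 * τ))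
  set b : ℂ → ℂ := (th4 · (2 * τ))
  have hda : Differentiable ℂ a := differentiable_th1 (two_mul_im_pos hτ)
  have hdb : Differentiable ℂ b := differentiable_th4 (two_mul_im_pos hτ)
  have hprod : (fun u => th1 u τ * th2 v τ)
      = fun u => a (u + v) * b (u - v) + b (u + v) * a (u - v) :=
    funext fun u => th1_mul_th2 u v hτ
  have hplus {f : ℂ → ℂ} (hf : Differentiable ℂ f) :
      HasDerivAt (fun u => f (u + v)) (deriv f v) 0 :=
    HasDerivAt.comp_add_const 0 v (by simpa using (hf v).hasDerivAt)
  have hminus {f : ℂ → ℂ} (hf : Differentiable ℂ f) :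
      HasDerivAt (fun u => f (u - v)) (deriv f (-v)) 0 :=
    HasDerivAt.comp_sub_const 0 v (by simpa using (hf (-v)).hasDerivAt)
  have hderiv := ((hplus hda).mul (hminus hdb)).add ((hplus hdb).mul (hminus hda)) |>.deriv
  have hleft := (((differentiable_th1 hτ) 0).hasDerivAt.mul_const (th2 v τ)).deriv
  rw [hprod] at hleft
  rw [← hleft]
  refine hderiv.trans ?_
  rw [deriv_of_odd (f := a) (fun z => th1_neg z _), deriv_of_even (f := b) (fun z => th4_neg z _),
    zero_add, zero_sub, show a (-v) = -a v from th1_neg v _, show b (-v) = b v from th4_neg v _]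
  ring

theorem deriv_th1_zero_ne_zero {τ : ℂ} (hτ : 0 < τ.im) : deriv (th1 · τ) 0 ≠ 0 := by
  intro h0
  have h2τ := two_mul_im_pos hτ
  have hzero : (th1 · (2 * τ)) = 0 :=
    eq_zero_of_wronskian_eq_zero (differentiable_th1 h2τ) (differentiable_th4 h2τ)
      (fun z => by simpa [h0, sub_eq_zero] using deriv_th1_zero_mul_th2 hτ z) (th1_zero _)
      (th4_zero_ne_zero h2τ)
  obtain ⟨z, hz⟩ := exists_th1_ne_zero h2τ
  exact hz (congrFun hzero z)

theorem th1_add_zero_mul_th2_add_zero {τ : ℂ} (hτ : 0 < τ.im) {l : ℂ} (hl : th1 l τ = 0)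
    (u w : ℂ) :
    th4 (u + w) (2 * τ) * (th1 (u + l) τ * th2 (w + l) τ)
      = th4 (u + w + 2 * l) (2 * τ) * (th1 u τ * th2 w τ) := by
  have hcross : th1 (u + w + 2 * l) (2 * τ) * th4 (u + w) (2 * τ)
      = th4 (u + w + 2 * l) (2 * τ) * th1 (u + w) (2 * τ) := by
    have h := th1_mul_th2 l (u + w + l) hτ
    rw [hl, zero_mul, show l + (u + w + l) = u + w + 2 * l by ring,
      show l - (u + w + l) = -(u + w) by ring, th4_neg, th1_neg] at h
    linear_combination -h
  rw [th1_mul_th2 _ _ hτ, th1_mul_th2 _ _ hτ, show u + l + (w + l) = u + w + 2 * l by ring,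
    add_sub_add_right_eq_sub]
  linear_combination th4 (u - w) (2 * τ) * hcross

theorem exists_th4_add_mul_th2_add_ne_zero {τ : ℂ} (hτ : 0 < τ.im) (s t : ℂ) :
    ∃ w, th4 (w + s) (2 * τ) * th2 (w + t) τ ≠ 0 := by
  have h2τ := two_mul_im_pos hτ
  obtain ⟨z, hz⟩ := exists_th2_ne_zero hτ
  exact exists_mul_ne_zero_of_entire ((differentiable_th4 h2τ).comp (differentiable_id.add_const s))
    ((differentiable_th2 hτ).comp (differentiable_id.add_const t))
    ⟨-s, by simpa using th4_zero_ne_zero h2τ⟩ ⟨z - t, by simpa using hz⟩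

theorem th1_add_eq_zero {τ : ℂ} (hτ : 0 < τ.im) {l m : ℂ} (hl : th1 l τ = 0)
    (hm : th1 m τ = 0) : th1 (m + l) τ = 0 := by
  obtain ⟨w, hw⟩ := exists_th4_add_mul_th2_add_ne_zero hτ m l
  have h := th1_add_zero_mul_th2_add_zero hτ hl m w
  rw [hm, zero_mul, mul_zero, mul_left_comm, add_comm m w] at h
  exact (mul_eq_zero.1 h).resolve_right hw

theorem deriv_th1_ne_zero {τ : ℂ} (hτ : 0 < τ.im) {l : ℂ} (hl : th1 l τ = 0) :
    deriv (th1 · τ) l ≠ 0 := by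
  intro hl'
  obtain ⟨w, hw⟩ := exists_th4_add_mul_th2_add_ne_zero hτ (2 * l) 0
  rw [add_zero] at hw
  have hd4 (c : ℂ) : HasDerivAt (fun u => th4 (u + c) (2 * τ)) (deriv (th4 · (2 * τ)) c) 0 :=
    HasDerivAt.comp_add_const 0 c
      (by rw [zero_add]; exact (differentiable_th4 (two_mul_im_pos hτ) c).hasDerivAt)
  have hd1 (c : ℂ) : HasDerivAt (fun u => th1 (u + c) τ) (deriv (th1 · τ) c) 0 :=
    HasDerivAt.comp_add_const 0 c (by rw [zero_add]; exact (differentiable_th1 hτ c).hasDerivAt)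
  have hleft := (hd4 w).mul ((hd1 l).mul_const (th2 (w + l) τ))
  have hright := (hd4 (w + 2 * l)).mul ((hd1 0).mul_const (th2 w τ))
  have hfun : (fun u => th4 (u + w) (2 * τ)) * (fun u => th1 (u + l) τ * th2 (w + l) τ)
      = (fun u => th4 (u + (w + 2 * l)) (2 * τ)) * fun u => th1 (u + 0) τ * th2 w τ := by
    funext u
    simpa [add_assoc] using th1_add_zero_mul_th2_add_zero hτ hl u w
  have h := hleft.unique (hfun ▸ hright)
  simp only [zero_add, hl, hl', th1_zero, zero_mul, mul_zero, add_zero] at h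
  have h0 : deriv (th1 · τ) 0 * (th4 (w + 2 * l) (2 * τ) * th2 w τ) = 0 := by
    rw [mul_left_comm]
    exact h.symm
  exact mul_ne_zero (deriv_th1_zero_ne_zero hτ) hw h0

theorem exists_th1_add_eq_th1_mul {τ : ℂ} (hτ : 0 < τ.im) {l : ℂ} (hl : th1 l τ = 0) :
    ∃ F ∈ thetaSpace τ 1 (exp (-2 * I * l)) 0, ∀ z, th1 (z + l) τ = th1 z τ * F z := by
  obtain ⟨F, hF, hFmul⟩ := exists_entire_quotient (f := fun z => th1 (z + l) τ)
    ((differentiable_th1 hτ).comp (differentiable_id.add_const l)) (differentiable_th1 hτ)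
    (fun z hz => th1_add_eq_zero hτ hl hz) (fun z hz => deriv_th1_ne_zero hτ hz)
  have hshift {w q : ℂ} (hw : ∀ z, th1 z τ * F (z + w) = th1 z τ * (q * F z)) (z : ℂ) :
      F (z + w) = q * F z :=
    eq_of_entire_mul_left_eq (differentiable_th1 hτ) (hF.comp (differentiable_id.add_const w))
      (hF.const_mul q) (exists_th1_ne_zero hτ) hw z
  refine ⟨F, ⟨hF, hshift fun z => ?_, fun z => ?_⟩, hFmul⟩
  · have h := hFmul (z + Real.pi)
    rw [add_right_comm, th1_add_pi, th1_add_pi, hFmul] at h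
    linear_combination h
  · rw [Nat.cast_zero, zero_mul, mul_zero, exp_zero, mul_one]
    refine hshift (fun w => ?_) z
    have h := hFmul (w + Real.pi * τ)
    rw [add_right_comm, th1_add_pi_mul, th1_add_pi_mul, hFmul,
      show -I * (Real.pi * τ + 2 * (w + l)) = -I * (Real.pi * τ + 2 * w) + -2 * I * l by ring,
      exp_add] at h
    refine mul_left_cancel₀ (exp_ne_zero (-I * (Real.pi * τ + 2 * w))) ?_
    linear_combination h

theorem exists_int_of_th1_eq_zero {τ : ℂ} (hτ : 0 < τ.im) {l : ℂ} (hl : th1 l τ = 0) :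
    ∃ M N : ℤ, l = M * Real.pi + N * (Real.pi * τ) := by
  obtain ⟨F, hF, hFmul⟩ := exists_th1_add_eq_th1_mul hτ hl
  obtain ⟨k, c, hkc⟩ := exists_eq_mul_exp_of_mem_thetaSpace_zero hτ one_ne_zero
    (exp_ne_zero _) hF
  have hk : k ≠ 0 := by
    rintro rfl
    obtain ⟨z, hz⟩ := exists_th1_ne_zero hτ
    have h := hFmul (z - l)
    rw [sub_add_cancel, hkc, zero_mul, mul_zero] at h
    exact hz h
  have hπ : exp (c * Real.pi) = 1 := by
    simpa [hkc, hk] using hF.2.1 0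
  have hπτ : exp (c * (Real.pi * τ)) = exp (-2 * I * l) := by
    simpa [hkc, hk, mul_comm] using hF.2.2 0
  obtain ⟨N, hN⟩ := exp_eq_one_iff.1 hπ
  obtain ⟨M, hM⟩ := exp_eq_exp_iff_exists_int.1 hπτ
  have hc : c = 2 * I * N := mul_right_cancel₀ (ofReal_ne_zero.2 Real.pi_ne_zero)
    (by linear_combination hN)
  refine ⟨M, -N, mul_left_cancel₀ (mul_ne_zero two_ne_zero I_ne_zero) ?_⟩
  rw [hc] at hM
  push_cast
  linear_combination hM

/-! ### Division and interpolation in spaces of theta functions -/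

theorem mem_thetaSpace_of_eq_mul {τ a b a' b' : ℂ} {m m' : ℕ} {f g h : ℂ → ℂ}
    (hg : g ∈ thetaSpace τ a b m) (ha : a ≠ 0) (hb : b ≠ 0) (hg0 : ∃ z, g z ≠ 0)
    (hf : f ∈ thetaSpace τ (a * a') (b * b') (m + m')) (hh : Differentiable ℂ h)
    (hfgh : ∀ z, f z = g z * h z) : h ∈ thetaSpace τ a' b' m' := by
  have hcancel {w : ℂ} {q : ℂ → ℂ} (hq : Differentiable ℂ q)
      (hw : ∀ z, g z * h (z + w) = g z * (q z * h z)) (z : ℂ) : h (z + w) = q z * h z :=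
    eq_of_entire_mul_left_eq hg.1 (hh.comp (differentiable_id.add_const w)) (hq.mul hh) hg0 hw z
  refine ⟨hh, hcancel (differentiable_const a') fun z => mul_left_cancel₀ ha ?_,
    hcancel (by fun_prop) fun z => mul_left_cancel₀
      (mul_ne_zero hb (exp_ne_zero (-2 * I * (m * z)))) ?_⟩
  · have hz := hf.2.1 z
    rw [hfgh, hfgh, hg.2.1] at hz
    linear_combination hz
  · have hz := hf.2.2 z
    rw [hfgh, hfgh, hg.2.2, Nat.cast_add, add_mul, mul_add, exp_add] at hz
    linear_combination hz

theorem eq_zero_add_int_lattice {τ a b : ℂ} {m : ℕ} {h : ℂ → ℂ} (hh : h ∈ thetaSpace τ a b m)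
    (ha : a ≠ 0) (hb : b ≠ 0) {z : ℂ} (hz : h z = 0) (M N : ℤ) :
    h (z + (M * Real.pi + N * (Real.pi * τ))) = 0 := by
  have hπ : Function.Periodic (fun z => h z = 0) Real.pi := fun z => by
    simp only [hh.2.1, mul_eq_zero, ha, false_or]
  have hπτ : Function.Periodic (fun z => h z = 0) (Real.pi * τ) := fun z => by
    simp only [hh.2.2, mul_eq_zero, hb, exp_ne_zero, false_or]
  exact (((hπ.int_mul M).add_period (hπτ.int_mul N)) z).mpr hz

theorem th1_sub_mem_thetaSpace {τ : ℂ} (hτ : 0 < τ.im) (t : ℂ) :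
    (fun z => th1 (z - t) τ) ∈ thetaSpace τ (-1) (-exp (-I * (Real.pi * τ - 2 * t))) 1 := by
  refine ⟨(differentiable_th1 hτ).comp (by fun_prop), fun z => ?_, fun z => ?_⟩
  · beta_reduce
    rw [add_sub_right_comm, th1_add_pi, neg_one_mul]
  · beta_reduce
    rw [add_sub_right_comm, th1_add_pi_mul, neg_mul (exp (-I * (Real.pi * τ - 2 * t))), ← exp_add]
    ring_nf

theorem exists_mem_thetaSpace_eq_th1_sub_mul {τ : ℂ} (hτ : 0 < τ.im) {a b t : ℂ} {m : ℕ}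
    (ha : a ≠ 0) (hb : b ≠ 0) {h : ℂ → ℂ}
    (hh : h ∈ thetaSpace τ (-1 * a) (-exp (-I * (Real.pi * τ - 2 * t)) * b) (1 + m))
    (ht : h t = 0) : ∃ q ∈ thetaSpace τ a b m, ∀ z, h z = th1 (z - t) τ * q z := by
  have hexp := neg_ne_zero.2 (exp_ne_zero (-I * (Real.pi * τ - 2 * t)))
  have hθ := th1_sub_mem_thetaSpace hτ t
  obtain ⟨q, hq, hfac⟩ := exists_entire_quotient hh.1 hθ.1
    (fun z hz => by
      obtain ⟨M, N, hMN⟩ := exists_int_of_th1_eq_zero hτ hz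
      rw [← add_sub_cancel t z, hMN]
      exact eq_zero_add_int_lattice hh (mul_ne_zero (by norm_num) ha) (mul_ne_zero hexp hb) ht M N)
    (fun z hz => by
      rw [deriv_comp_sub_const (th1 · τ)]
      exact deriv_th1_ne_zero hτ hz)
  obtain ⟨z₀, hz₀⟩ := exists_th1_ne_zero hτ
  exact ⟨q, mem_thetaSpace_of_eq_mul hθ (by norm_num) hexp ⟨z₀ + t, by simpa using hz₀⟩ hh hq hfac,
    hfac⟩

theorem eq_zero_of_mem_thetaSpace {τ : ℂ} (hτ : 0 < τ.im) {m : ℕ} {a b : ℂ} (ha : a ≠ 0)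
    (hb : b ≠ 0) {h : ℂ → ℂ} (hh : h ∈ thetaSpace τ a b m) {S : Finset ℂ} (hcard : m < S.card)
    (hS : (S : Set ℂ).Pairwise fun s t => th1 (s - t) τ ≠ 0) (h0 : ∀ s ∈ S, h s = 0) : h = 0 := by
  classical
  induction m generalizing a b h S with
  | zero =>
    obtain ⟨t, ht⟩ := Finset.card_pos.1 hcard
    exact eq_zero_of_mem_thetaSpace_zero hτ ha hb hh (h0 t ht)
  | succ m ih =>
    obtain ⟨t, ht⟩ := Finset.card_pos.1 (Nat.zero_lt_of_lt hcard)
    set e := -exp (-I * (Real.pi * τ - 2 * t)) with he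
    have hexp : e ≠ 0 := neg_ne_zero.2 (exp_ne_zero _)
    rw [← mul_div_cancel₀ b hexp, ← neg_neg a, ← neg_one_mul (-a), add_comm m 1] at hh
    obtain ⟨q, hq, hfac⟩ := exists_mem_thetaSpace_eq_th1_sub_mul hτ (neg_ne_zero.2 ha)
      (div_ne_zero hb hexp) hh (h0 t ht)
    have hq0 : q = 0 := ih (neg_ne_zero.2 ha) (div_ne_zero hb hexp) hq (S := S.erase t)
      (by rw [Finset.card_erase_of_mem ht]; omega)
      (hS.mono (Finset.erase_subset t S)) fun s hs => by
        obtain ⟨hst, hs⟩ := Finset.mem_erase.1 hs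
        have hzero := h0 s hs
        rw [hfac] at hzero
        exact (mul_eq_zero.1 hzero).resolve_left (hS hs ht hst)
    funext z
    rw [hfac, hq0, Pi.zero_apply, mul_zero]

theorem th1_real_mul_pi_ne_zero {τ : ℂ} (hτ : 0 < τ.im) {q : ℝ} (hq : ∀ m : ℤ, q ≠ m) :
    th1 (q * Real.pi) τ ≠ 0 := by
  intro h
  obtain ⟨M, N, hMN⟩ := exists_int_of_th1_eq_zero hτ h
  have him := congrArg im hMN
  simp only [mul_im, ofReal_im, ofReal_re, add_im, mul_re, intCast_re, intCast_im, mul_zero,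
    zero_mul, add_zero, sub_zero, zero_add, zero_eq_mul, Int.cast_eq_zero] at him
  rw [him.resolve_right (mul_pos Real.pi_pos hτ).ne', Int.cast_zero, zero_mul, add_zero] at hMN
  exact hq M (by exact_mod_cast mul_right_cancel₀ (ofReal_ne_zero.2 Real.pi_ne_zero) hMN)

theorem exists_finset_thetaSpace_eq_zero {τ : ℂ} (hτ : 0 < τ.im) {a b : ℂ} (ha : a ≠ 0)
    (hb : b ≠ 0) (m : ℕ) :
    ∃ S : Finset ℂ, ∀ h ∈ thetaSpace τ a b m, (∀ s ∈ S, h s = 0) → h = 0 := by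
  obtain ⟨T, hT, hcard⟩ :=
    (Set.Ico_infinite (zero_lt_one' ℝ)).exists_subset_card_eq (m + 1)
  have hinj : Function.Injective fun q : ℝ => (q * Real.pi : ℂ) := fun q r hqr =>
    ofReal_injective (mul_right_cancel₀ (ofReal_ne_zero.2 Real.pi_ne_zero) hqr)
  refine ⟨T.map ⟨_, hinj⟩, fun h hh => eq_zero_of_mem_thetaSpace hτ ha hb hh ?_ ?_⟩
  · rw [Finset.card_map, hcard]
    exact m.lt_succ_self
  · simp only [Finset.coe_map, Function.Embedding.coeFn_mk]
    rw [hinj.injOn.pairwise_image]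
    intro q hq r hr hqr
    obtain ⟨hq0, hq1⟩ := hT hq
    obtain ⟨hr0, hr1⟩ := hT hr
    simp only [Function.onFun, ← sub_mul, ← ofReal_sub]
    refine th1_real_mul_pi_ne_zero hτ fun M hM => hqr ?_
    have habs : |q - r| < 1 := abs_sub_lt_iff.2 ⟨by linarith, by linarith⟩
    have hM0 : M = 0 := Int.abs_lt_one_iff.1 (by exact_mod_cast hM ▸ habs)
    rwa [hM0, Int.cast_zero, sub_eq_zero] at hM

theorem exists_interpolation {V : Submodule ℂ (ℂ → ℂ)} (S : Finset ℂ)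
    (hS : ∀ h ∈ V, (∀ s ∈ S, h s = 0) → h = 0) :
    ∃ E : S → ℂ → ℂ, (∀ s, E s ∈ V) ∧ ∀ h ∈ V, ∀ z, h z = ∑ s : S, h s * E s z := by
  classical
  let eval : V →ₗ[ℂ] (S → ℂ) := LinearMap.pi fun s => LinearMap.proj (s : ℂ) ∘ₗ V.subtype
  have hker : LinearMap.ker eval = ⊥ := LinearMap.ker_eq_bot'.2 fun h hh =>
    Subtype.ext (hS h.1 h.2 fun s hs => congrFun hh ⟨s, hs⟩)
  obtain ⟨L, hL⟩ := LinearMap.exists_leftInverse_of_injective eval hker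
  refine ⟨fun s => (L (Pi.single s 1)).1, fun s => (L _).2, fun h hh z => ?_⟩
  have hsum : L (eval ⟨h, hh⟩) = ∑ s : S, h s • L (Pi.single s 1) := by
    rw [pi_eq_sum_univ' (eval ⟨h, hh⟩), map_sum]
    simp only [map_smul]
    rfl
  rw [show L (eval ⟨h, hh⟩) = ⟨h, hh⟩ from LinearMap.congr_fun hL ⟨h, hh⟩] at hsum
  simpa [Finset.sum_apply] using congrArg (fun f : V => f.1 z) hsum

theorem differentiable_apply_neg {τ : ℂ} (hτ : 0 < τ.im) {a b : ℂ} (ha : a ≠ 0) (hb : b ≠ 0)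
    {m : ℕ} {f : ℂ → ℂ → ℂ} (hf : ∀ w, Differentiable ℂ fun z => f z w)
    (hmem : ∀ z, f z ∈ thetaSpace τ a (b * exp (2 * I * z)) m) :
    Differentiable ℂ fun z => f z (-z) := by
  have h4 := differentiable_th4 hτ
  -- The factor `ϑ₄(z + w)` removes the `z`-dependence of the multipliers, so that one set of
  -- interpolation nodes serves all `z`; on the antidiagonal it is the constant `ϑ₄(0)`.
  have hmem' (z : ℂ) : (fun w => f z w * th4 (z + w) τ) ∈
      thetaSpace τ a (-(b * exp (-I * (Real.pi * τ)))) (m + 1) := by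
    obtain ⟨hd, hπ, hπτ⟩ := hmem z
    refine ⟨by fun_prop, fun w => ?_, fun w => ?_⟩
    · beta_reduce
      rw [hπ, ← add_assoc, th4_add_pi, mul_assoc]
    · have hexp : exp (2 * I * z) * exp (-2 * I * (m * w)) *
          exp (-I * (Real.pi * τ + 2 * (z + w)))
          = exp (-I * (Real.pi * τ)) * exp (-2 * I * ((m + 1 : ℕ) * w)) := by
        simp only [← exp_add]
        congr 1
        push_cast
        ring
      beta_reduce
      rw [hπτ, ← add_assoc, th4_add_pi_mul]
      linear_combination -b * f z w * th4 (z + w) τ * hexp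
  have hb' : -(b * exp (-I * (Real.pi * τ))) ≠ 0 := neg_ne_zero.2 (mul_ne_zero hb (exp_ne_zero _))
  obtain ⟨S, hS⟩ := exists_finset_thetaSpace_eq_zero hτ ha hb' (m + 1)
  obtain ⟨E, hE, hinterp⟩ := exists_interpolation S hS
  have hE' (s : S) : Differentiable ℂ (E s) := (hE s).1
  have heq (z : ℂ) :
      f z (-z) = (th4 0 τ)⁻¹ * ∑ s : S, f z s * th4 (z + s) τ * E s (-z) := by
    rw [← hinterp _ (hmem' z) (-z), add_neg_cancel, mul_comm (f z (-z)),
      inv_mul_cancel_left₀ (th4_zero_ne_zero hτ)]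
  simp only [heq]
  fun_prop

/-! ### Factors of functions of several variables -/

section Multivariable

open Function

variable {ι : Type*} [DecidableEq ι] {g : ℂ → ℂ}

theorem exists_slice_factor {V A : Submodule ℂ (ℂ → ℂ)} {S : Finset ℂ}
    (hS : ∀ h ∈ V, (∀ s ∈ S, h s = 0) → h = 0) {X : (ι → ℂ) → ℂ} {i : ι}
    (hX : ∀ x, (fun z => X (update x i z)) ∈ A.map (LinearMap.mulLeft ℂ g) ⊓ V) :
    ∃ Y : (ι → ℂ) → ℂ, (∀ x, X x = g (x i) * Y x) ∧ (∀ x, (fun z => Y (update x i z)) ∈ A) ∧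
      ∀ j ≠ i, ∀ B : Submodule ℂ (ℂ → ℂ), (∀ x, (fun z => X (update x j z)) ∈ B) →
        ∀ x, (fun z => Y (update x j z)) ∈ B := by
  obtain ⟨E, hEmem, hE⟩ := exists_interpolation S fun h hh => hS h (Submodule.mem_inf.1 hh).2
  have hEmap (s : S) : ∃ e ∈ A, LinearMap.mulLeft ℂ g e = E s := Submodule.mem_map.1 (hEmem s).1
  choose e heA heE using hEmap
  have hEe (s : S) (z : ℂ) : E s z = g z * e s z := (congrFun (heE s) z).symm
  refine ⟨fun x => ∑ s : S, X (update x i s) * e s (x i), fun x => ?_, fun x => ?_,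
    fun j hj B hB x => ?_⟩
  · have hx := hE _ (hX x) (x i)
    simp only [update_eq_self, hEe] at hx
    rw [hx, Finset.mul_sum]
    exact Finset.sum_congr rfl fun s _ => mul_left_comm _ _ _
  · have hslice : (fun z => ∑ s : S, X (update (update x i z) i s) * e s (update x i z i))
        = ∑ s : S, X (update x i s) • e s := by
      funext z
      simp
    exact hslice ▸ A.sum_mem fun s _ => A.smul_mem _ (heA s)
  · have hslice : (fun z => ∑ s : S, X (update (update x j z) i s) * e s (update x j z i))
        = ∑ s : S, e s (x i) • fun z => X (update (update x i s) j z) := by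
      funext z
      simp only [Finset.sum_apply, Pi.smul_apply, smul_eq_mul, update_of_ne hj.symm]
      exact Finset.sum_congr rfl fun s _ => by rw [update_comm hj, mul_comm]
    exact hslice ▸ B.sum_mem fun s _ => B.smul_mem _ (hB _)

theorem exists_prod_factor [Fintype ι] {V A : Submodule ℂ (ℂ → ℂ)} {S : Finset ℂ}
    (hS : ∀ h ∈ V, (∀ s ∈ S, h s = 0) → h = 0) {Z : (ι → ℂ) → ℂ}
    (hZ : ∀ x i, (fun z => Z (update x i z)) ∈ A.map (LinearMap.mulLeft ℂ g) ⊓ V) :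
    ∃ X : (ι → ℂ) → ℂ, (∀ x, Z x = (∏ i, g (x i)) * X x) ∧
      ∀ x i, (fun z => X (update x i z)) ∈ A := by
  suffices h : ∀ t : Finset ι, ∃ X : (ι → ℂ) → ℂ, (∀ x, Z x = (∏ i ∈ t, g (x i)) * X x) ∧
      (∀ i ∈ t, ∀ x, (fun z => X (update x i z)) ∈ A) ∧
      ∀ i ∉ t, ∀ x, (fun z => X (update x i z)) ∈ A.map (LinearMap.mulLeft ℂ g) ⊓ V by
    obtain ⟨X, hX, hXA, -⟩ := h Finset.univ
    exact ⟨X, hX, fun x i => hXA i (Finset.mem_univ i) x⟩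
  intro t
  induction t using Finset.induction_on with
  | empty => exact ⟨Z, by simp, by simp, fun i _ x => hZ x i⟩
  | insert i t hi ih =>
    obtain ⟨X, hX, hXA, hXV⟩ := ih
    obtain ⟨Y, hXY, hYA, hY⟩ := exists_slice_factor hS (hXV i hi)
    refine ⟨Y, fun x => ?_, fun j hj => ?_, fun j hj => ?_⟩
    · rw [hX, hXY, Finset.prod_insert hi]
      ring
    · rcases eq_or_ne j i with rfl | hji
      · exact hYA
      · exact hY j hji A (hXA j (Finset.mem_of_mem_insert_of_ne hj hji))
    · rw [Finset.mem_insert, not_or] at hj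
      exact hY j hj.1 _ (hXV j hj.2)

theorem eq_zero_of_prod_mul_eq_zero (hg : Differentiable ℂ g) (hg0 : ∃ z, g z ≠ 0)
    {F : (ι → ℂ) → ℂ} (hF : ∀ x i, Differentiable ℂ fun z => F (update x i z)) (s : Finset ι)
    (h0 : ∀ x, (∏ i ∈ s, g (x i)) * F x = 0) (x : ι → ℂ) : F x = 0 := by
  induction s using Finset.induction_on generalizing x with
  | empty => simpa using h0 x
  | insert i s hi ih =>
    refine ih (fun x => ?_) x
    have hprod (z : ℂ) : ∏ j ∈ s, g (update x i z j) = ∏ j ∈ s, g (x j) :=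
      Finset.prod_congr rfl fun j hj => by rw [update_of_ne (ne_of_mem_of_not_mem hj hi)]
    have hslice := eq_of_entire_mul_left_eq hg ((hF x i).const_mul (∏ j ∈ s, g (x j)))
      (differentiable_const 0) hg0 (fun z => by
        have hz := h0 (update x i z)
        rwa [Finset.prod_insert hi, hprod, update_self, mul_assoc, ← mul_zero (g z)] at hz) (x i)
    simpa using hslice

theorem symmetric_of_prod_mul [Fintype ι] (hg : Differentiable ℂ g) (hg0 : ∃ z, g z ≠ 0)
    {Z X : (ι → ℂ) → ℂ} (hX : ∀ x i, Differentiable ℂ fun z => X (update x i z))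
    (hZ : ∀ x, Z x = (∏ i, g (x i)) * X x) (σ : Equiv.Perm ι)
    (hσ : ∀ x, Z (fun i => x (σ i)) = Z x) (x : ι → ℂ) : X (fun i => x (σ i)) = X x := by
  rw [← sub_eq_zero]
  refine eq_zero_of_prod_mul_eq_zero hg hg0 (F := fun x => X (fun i => x (σ i)) - X x)
    (fun x i => .sub ?_ (hX x i)) Finset.univ (fun x => ?_) x
  · have hupdate (z : ℂ) : (fun j => update x i z (σ j))
        = update (fun j => x (σ j)) (σ.symm i) z := by
      funext j
      simp only [update_apply, Equiv.eq_symm_apply]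
    simp only [hupdate]
    exact hX _ _
  · have h := hσ x
    rw [hZ, hZ, Equiv.prod_comp σ fun i => g (x i)] at h
    rw [mul_sub, h, sub_self]

end Multivariable

/-! ### Weights of the eight-vertex model -/

section Weights

variable {τ : ℂ}

theorem th1_pi_sub (z τ : ℂ) : th1 (Real.pi - z) τ = th1 z τ := by
  rw [sub_eq_neg_add, th1_add_pi, th1_neg, neg_neg]

theorem th4_pi_sub (z τ : ℂ) : th4 (Real.pi - z) τ = th4 z τ := by
  rw [sub_eq_neg_add, th4_add_pi, th4_neg]

theorem three_mul_ηc : 3 * ηc = Real.pi := by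
  rw [ηc]
  ring

theorem th1_mul_ηc_ne_zero (hτ : 0 < τ.im) {k : ℤ} (hk : ¬3 ∣ k) : th1 (k * ηc) τ ≠ 0 := by
  have hcast : ((k / 3 : ℝ) : ℂ) * Real.pi = k * ηc := by
    rw [ηc]
    push_cast
    ring
  rw [← hcast]
  refine th1_real_mul_pi_ne_zero hτ fun m hm => hk ⟨m, ?_⟩
  have hkm : (k : ℝ) = 3 * m := by rw [← hm]; ring
  exact_mod_cast hkm

theorem th1_ηc_ne_zero (hτ : 0 < τ.im) : th1 ηc τ ≠ 0 := by
  simpa using th1_mul_ηc_ne_zero hτ (k := 1) (by norm_num)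

theorem th1_two_mul_ηc_ne_zero (hτ : 0 < τ.im) : th1 (2 * ηc) τ ≠ 0 := by
  simpa using th1_mul_ηc_ne_zero hτ (k := 2) (by norm_num)

theorem th1_four_mul_ηc_ne_zero (hτ : 0 < τ.im) : th1 (4 * ηc) τ ≠ 0 := by
  simpa using th1_mul_ηc_ne_zero hτ (k := 4) (by norm_num)

theorem rv_eq (hτ : 0 < τ.im) (u : ℂ) :
    rv τ u = th4 0 (2 * τ) * th1 (u + ηc) (2 * τ) * th4 (u + ηc) (2 * τ) := by
  have h2η0 : th1 ηc τ * th2 0 τ = 2 * (th1 (2 * ηc) (2 * τ) * th4 (2 * ηc) (2 * τ)) := by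
    have hη : th1 (2 * ηc) τ = th1 ηc τ := by
      rw [← th1_pi_sub ηc, ← three_mul_ηc]
      congr 1
      ring
    rw [← hη, th1_mul_th2 _ _ hτ, add_zero, sub_zero]
    ring
  have hηη : th1 ηc τ * th2 ηc τ = th1 (2 * ηc) (2 * τ) * th4 0 (2 * τ) := by
    rw [th1_mul_th2 _ _ hτ, sub_self, th1_zero, mul_zero, add_zero, two_mul ηc]
  have hu0 : th1 (u + ηc) τ * th2 0 τ = 2 * (th1 (u + ηc) (2 * τ) * th4 (u + ηc) (2 * τ)) := by
    rw [th1_mul_th2 _ _ hτ, add_zero, sub_zero]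
    ring
  have huη : th1 (u + ηc) τ * th2 ηc τ = th1 (u + 2 * ηc) (2 * τ) * th4 u (2 * τ)
      + th4 (u + 2 * ηc) (2 * τ) * th1 u (2 * τ) := by
    rw [th1_mul_th2 _ _ hτ, add_sub_cancel_right, add_assoc, ← two_mul]
  refine mul_left_cancel₀ (th1_ηc_ne_zero hτ) ?_
  rw [rv, av, bv]
  linear_combination th4 (2 * ηc) (2 * τ) * th1 (u + ηc) τ * hηη
    - th1 ηc τ * th4 (2 * ηc) (2 * τ) * huη - (1 / 2) * th4 0 (2 * τ) * th1 (u + ηc) τ * h2η0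
    + (1 / 2) * th1 ηc τ * th4 0 (2 * τ) * hu0

theorem rv_neg_two_mul (hτ : 0 < τ.im) (x : ℂ) :
    rv τ (-2 * x)
      = th4 0 (2 * τ) * th1 (2 * (ηc + x)) (2 * τ) * th4 (2 * (ηc + x)) (2 * τ) := by
  have harg : (Real.pi : ℂ) - (-2 * x + ηc) = 2 * (ηc + x) := by
    rw [← three_mul_ηc]
    ring
  rw [rv_eq hτ, ← th1_pi_sub (-2 * x + ηc), ← th4_pi_sub (-2 * x + ηc), harg]

theorem differentiable_rv (hτ : 0 < τ.im) : Differentiable ℂ (rv τ) := by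
  have h1 := differentiable_th1 (two_mul_im_pos hτ)
  have h4 := differentiable_th4 (two_mul_im_pos hτ)
  rw [funext (rv_eq hτ)]
  fun_prop

theorem exists_rv_ne_zero (hτ : 0 < τ.im) : ∃ u, rv τ u ≠ 0 := by
  have hτ2 := two_mul_im_pos hτ
  obtain ⟨z, hz⟩ := exists_mul_ne_zero_of_entire (differentiable_th1 hτ2) (differentiable_th4 hτ2)
    (exists_th1_ne_zero hτ2) ⟨0, th4_zero_ne_zero hτ2⟩
  refine ⟨z - ηc, ?_⟩
  rw [rv_eq hτ, sub_add_cancel, mul_assoc]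
  exact mul_ne_zero (th4_zero_ne_zero hτ2) hz

theorem cv_add_bv (hτ : 0 < τ.im) (x : ℂ) :
    cv τ (-2 * x) + bv τ (-2 * x)
      = th4 (2 * (ηc + -x)) (2 * τ) * (th1 (ηc - x) τ * th2 (ηc + x) τ) := by
  rw [th1_mul_th2 _ _ hτ, show ηc - x + (ηc + x) = 2 * ηc by ring,
    show ηc - x - (ηc + x) = -2 * x by ring, cv, bv,
    show -2 * x + 2 * ηc = 2 * (ηc + -x) by ring]
  ring

theorem cv_sub_bv (hτ : 0 < τ.im) (x : ℂ) :
    cv τ (-2 * x) - bv τ (-2 * x)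
      = th4 (2 * (ηc + -x)) (2 * τ) * (th1 (ηc + x) τ * th2 (ηc - x) τ) := by
  rw [th1_mul_th2 _ _ hτ, show ηc + x + (ηc - x) = 2 * ηc by ring,
    show ηc + x - (ηc - x) = -(-2 * x) by ring, cv, bv, th1_neg, th4_neg,
    show -2 * x + 2 * ηc = 2 * (ηc + -x) by ring]
  ring

theorem av_add_dv (hτ : 0 < τ.im) (x : ℂ) :
    av τ (-2 * x) + dv τ (-2 * x)
      = th1 (2 * (ηc + -x)) (2 * τ) * (th3 (ηc + x) τ * th4 (ηc - x) τ) := by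
  rw [th3_mul_th4 _ _ hτ, show ηc + x + (ηc - x) = 2 * ηc by ring,
    show ηc + x - (ηc - x) = -(-2 * x) by ring, av, dv, th1_neg, th4_neg,
    show -2 * x + 2 * ηc = 2 * (ηc + -x) by ring]
  ring

theorem av_sub_dv (hτ : 0 < τ.im) (x : ℂ) :
    av τ (-2 * x) - dv τ (-2 * x)
      = th1 (2 * (ηc + -x)) (2 * τ) * (th3 (ηc - x) τ * th4 (ηc + x) τ) := by
  rw [th3_mul_th4 _ _ hτ, show ηc - x + (ηc + x) = 2 * ηc by ring,
    show ηc - x - (ηc + x) = -2 * x by ring, av, dv,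
    show -2 * x + 2 * ηc = 2 * (ηc + -x) by ring]
  ring

end Weights

/-! ### Boundary kernels -/

/-- The sign attached to a spin by `σ^z`. -/
def spinSign (s : Fin 2) : ℂ := if s = 0 then 1 else -1

/-- The action of `Ř(u)` on a vector of `ℂ² ⊗ ℂ²`. -/
def pairRc (τ u : ℂ) (K : Fin 2 → Fin 2 → ℂ) (a b : Fin 2) : ℂ :=
  ∑ s : Fin 2, ∑ t : Fin 2, Rcheckent τ u (a, b) (s, t) * K s t

/-- The boundary Yang–Baxter equation for the vectors `K₁` and `K₂` of `ℂ² ⊗ ℂ²` with spectral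
parameters `x₁` and `x₂`, written in components. -/
def BoundaryYangBaxter (τ x₁ x₂ : ℂ) (K₁ K₂ : Fin 2 → Fin 2 → ℂ) : Prop :=
  ∀ a b c d : Fin 2,
    ∑ s : Fin 2, ∑ t : Fin 2, Rcheckent τ (x₂ - x₁) (a, b) (s, t) *
      ∑ s' : Fin 2, ∑ t' : Fin 2, Rcheckent τ (-x₂ - x₁) (t, c) (s', t') *
        (K₂ s s' * K₁ t' d)
    = ∑ s : Fin 2, ∑ t : Fin 2, Rcheckent τ (x₂ - x₁) (c, d) (s, t) *
      ∑ s' : Fin 2, ∑ t' : Fin 2, Rcheckent τ (-x₂ - x₁) (b, s) (s', t') *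
        (K₁ a s' * K₂ t' t)

/-- The properties shared by the boundary vectors `χ` and `χ̄` that determine the analytic
properties of `Z_n` and `Z̄_n^±`. The function `G` is the factor which each variable contributes
to the scalar product: by `reflection` the vector `G(x) k(-x)` is mapped by `Ř(-2x)` to a multiple
of `G(-x) k(x)`. -/
structure IsBoundaryKernel (τ : ℂ) (k : ℂ → Fin 2 → Fin 2 → ℂ) (G : ℂ → ℂ) : Prop where
  differentiable : ∀ a b, Differentiable ℂ fun z => k z a b
  add_pi : ∀ z a b, k (z + Real.pi) a b * (spinSign a * spinSign b) = k z a b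
  add_pi_mul : ∀ z a b, k (z + Real.pi * τ) (flipS a) (flipS b)
    = -exp (-I * (Real.pi * τ + 2 * z - 2 * ηc)) * k z a b
  reflection : ∃ c : ℂ → ℂ, Differentiable ℂ c ∧ (∃ z, c z ≠ 0) ∧
    ∀ x, rv τ (-2 * x) = c x * G x ∧
      ∀ a b, pairRc τ (-2 * x) (k (-x)) a b = c x * G (-x) * k x a b
  exchange : ∀ x₁ x₂, BoundaryYangBaxter τ x₁ x₂ (k x₁) (k x₂)

section BoundaryVectors

variable {τ : ℂ} (lam : ℂ)

theorem exists_th1_two_mul_ηc_add_ne_zero (hτ : 0 < τ.im) :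
    ∃ z, th1 (2 * (ηc + z)) (2 * τ) ≠ 0 :=
  ⟨0, by simpa using th1_two_mul_ηc_ne_zero (two_mul_im_pos hτ)⟩

theorem exists_th4_two_mul_ηc_add_ne_zero (hτ : 0 < τ.im) :
    ∃ z, th4 (2 * (ηc + z)) (2 * τ) ≠ 0 :=
  ⟨-ηc, by simpa using th4_zero_ne_zero (two_mul_im_pos hτ)⟩

theorem I_mul_exp_mul_I_mul_exp (u v : ℂ) :
    I * exp (-I * (Real.pi * τ / 2 + u)) * (I * exp (-I * (Real.pi * τ / 2 + v)))
      = -exp (-I * (Real.pi * τ + (u + v))) := by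
  rw [mul_mul_mul_comm, I_mul_I, ← exp_add, neg_one_mul]
  ring_nf

theorem th1_sub_ηc_mul_th2_sub_ηc (hτ : 0 < τ.im) (x y : ℂ) :
    th1 (x - ηc) τ * th2 (y - ηc) τ
      = -(th1 (-y - x + 2 * ηc) (2 * τ) * th4 (y - x) (2 * τ)
        + th4 (-y - x + 2 * ηc) (2 * τ) * th1 (y - x) (2 * τ)) := by
  rw [th1_mul_th2 _ _ hτ, show x - ηc + (y - ηc) = -(-y - x + 2 * ηc) by ring,
    show x - ηc - (y - ηc) = -(y - x) by ring, th1_neg, th1_neg, th4_neg, th4_neg]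
  ring

theorem th3_sub_ηc_mul_th4_sub_ηc (hτ : 0 < τ.im) (x y : ℂ) :
    th3 (x - ηc) τ * th4 (y - ηc) τ
      = th4 (-y - x + 2 * ηc) (2 * τ) * th4 (y - x) (2 * τ)
        - th1 (-y - x + 2 * ηc) (2 * τ) * th1 (y - x) (2 * τ) := by
  rw [th3_mul_th4 _ _ hτ, show x - ηc + (y - ηc) = -(-y - x + 2 * ηc) by ring,
    show x - ηc - (y - ηc) = -(y - x) by ring, th1_neg, th1_neg, th4_neg, th4_neg]
  ring

theorem chiC_zero_one (τ x : ℂ) :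
    chiC τ lam x 0 1 = th1 (x + lam) (2 * τ) * th4 (x - lam - 2 * ηc) (2 * τ) := by
  simp [chiC]

theorem chiC_one_zero (τ x : ℂ) :
    chiC τ lam x 1 0 = th1 (x - lam - 2 * ηc) (2 * τ) * th4 (x + lam) (2 * τ) := by
  simp [chiC]

theorem chiC_self (τ x : ℂ) (s : Fin 2) : chiC τ lam x s s = 0 := by
  fin_cases s <;> simp [chiC]

theorem chibarC_zero_zero (τ x : ℂ) :
    chibarC τ lam x 0 0 = th1 (x + lam) (2 * τ) * th1 (x - lam - 2 * ηc) (2 * τ) := by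
  simp [chibarC]

theorem chibarC_one_one (τ x : ℂ) :
    chibarC τ lam x 1 1 = th4 (x - lam - 2 * ηc) (2 * τ) * th4 (x + lam) (2 * τ) := by
  simp [chibarC]

theorem chibarC_of_ne (τ x : ℂ) {s t : Fin 2} (hst : s ≠ t) : chibarC τ lam x s t = 0 := by
  fin_cases s <;> fin_cases t <;> simp_all [chibarC]

theorem chiC_add (hτ : 0 < τ.im) (x : ℂ) :
    chiC τ lam x 0 1 + chiC τ lam x 1 0 = th1 (x - ηc) τ * th2 (lam + ηc) τ := by
  rw [chiC_zero_one, chiC_one_zero, th1_mul_th2 _ _ hτ,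
    show x - ηc + (lam + ηc) = x + lam by ring,
    show x - ηc - (lam + ηc) = x - lam - 2 * ηc by ring]
  ring

theorem chiC_sub (hτ : 0 < τ.im) (x : ℂ) :
    chiC τ lam x 0 1 - chiC τ lam x 1 0 = th1 (lam + ηc) τ * th2 (x - ηc) τ := by
  rw [chiC_zero_one, chiC_one_zero, th1_mul_th2 _ _ hτ,
    show lam + ηc + (x - ηc) = x + lam by ring,
    show lam + ηc - (x - ηc) = -(x - lam - 2 * ηc) by ring, th1_neg, th4_neg]
  ring

theorem chibarC_add (hτ : 0 < τ.im) (x : ℂ) :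
    chibarC τ lam x 0 0 + chibarC τ lam x 1 1 = th3 (lam + ηc) τ * th4 (x - ηc) τ := by
  rw [chibarC_zero_zero, chibarC_one_one, th3_mul_th4 _ _ hτ,
    show lam + ηc + (x - ηc) = x + lam by ring,
    show lam + ηc - (x - ηc) = -(x - lam - 2 * ηc) by ring, th1_neg, th4_neg]
  ring

theorem chibarC_sub (hτ : 0 < τ.im) (x : ℂ) :
    chibarC τ lam x 1 1 - chibarC τ lam x 0 0 = th3 (x - ηc) τ * th4 (lam + ηc) τ := by
  rw [chibarC_zero_zero, chibarC_one_one, th3_mul_th4 _ _ hτ,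
    show x - ηc + (lam + ηc) = x + lam by ring,
    show x - ηc - (lam + ηc) = x - lam - 2 * ηc by ring]
  ring

theorem chiC_mul_sub_mul_swap (hτ : 0 < τ.im) (x₁ x₂ : ℂ) :
    chiC τ lam x₂ 0 1 * chiC τ lam x₁ 1 0 - chiC τ lam x₁ 0 1 * chiC τ lam x₂ 1 0
      = -(th1 (lam + ηc) τ * th2 (lam + ηc) τ) *
        (th4 (-x₂ - x₁ + 2 * ηc) (2 * τ) * th1 (x₂ - x₁) (2 * τ)) := by
  have h₁₂ := th1_sub_ηc_mul_th2_sub_ηc hτ x₁ x₂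
  have h₂₁ := th1_sub_ηc_mul_th2_sub_ηc hτ x₂ x₁
  rw [← neg_sub x₂ x₁, th1_neg, th4_neg, neg_sub_comm x₁ x₂] at h₂₁
  calc _ = 1 / 2 * ((chiC τ lam x₁ 0 1 + chiC τ lam x₁ 1 0) * (chiC τ lam x₂ 0 1 -
        chiC τ lam x₂ 1 0) - (chiC τ lam x₂ 0 1 + chiC τ lam x₂ 1 0) * (chiC τ lam x₁ 0 1 -
        chiC τ lam x₁ 1 0)) := by ring
    _ = _ := by
      simp only [chiC_add lam hτ, chiC_sub lam hτ]
      linear_combination (1 / 2) * th1 (lam + ηc) τ * th2 (lam + ηc) τ * (h₁₂ - h₂₁)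

theorem chiC_mul_sub_mul_flip (hτ : 0 < τ.im) (x₁ x₂ : ℂ) :
    chiC τ lam x₁ 0 1 * chiC τ lam x₂ 0 1 - chiC τ lam x₁ 1 0 * chiC τ lam x₂ 1 0
      = -(th1 (lam + ηc) τ * th2 (lam + ηc) τ) *
        (th1 (-x₂ - x₁ + 2 * ηc) (2 * τ) * th4 (x₂ - x₁) (2 * τ)) := by
  have h₁₂ := th1_sub_ηc_mul_th2_sub_ηc hτ x₁ x₂
  have h₂₁ := th1_sub_ηc_mul_th2_sub_ηc hτ x₂ x₁
  rw [← neg_sub x₂ x₁, th1_neg, th4_neg, neg_sub_comm x₁ x₂] at h₂₁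
  calc _ = 1 / 2 * ((chiC τ lam x₁ 0 1 + chiC τ lam x₁ 1 0) * (chiC τ lam x₂ 0 1 -
        chiC τ lam x₂ 1 0) + (chiC τ lam x₂ 0 1 + chiC τ lam x₂ 1 0) * (chiC τ lam x₁ 0 1 -
        chiC τ lam x₁ 1 0)) := by ring
    _ = _ := by
      simp only [chiC_add lam hτ, chiC_sub lam hτ]
      linear_combination (1 / 2) * th1 (lam + ηc) τ * th2 (lam + ηc) τ * (h₁₂ + h₂₁)

theorem chibarC_mul_sub_mul_swap (hτ : 0 < τ.im) (x₁ x₂ : ℂ) :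
    chibarC τ lam x₂ 0 0 * chibarC τ lam x₁ 1 1 - chibarC τ lam x₁ 0 0 * chibarC τ lam x₂ 1 1
      = -(th3 (lam + ηc) τ * th4 (lam + ηc) τ) *
        (th1 (-x₂ - x₁ + 2 * ηc) (2 * τ) * th1 (x₂ - x₁) (2 * τ)) := by
  have h₁₂ := th3_sub_ηc_mul_th4_sub_ηc hτ x₁ x₂
  have h₂₁ := th3_sub_ηc_mul_th4_sub_ηc hτ x₂ x₁
  rw [← neg_sub x₂ x₁, th1_neg, th4_neg, neg_sub_comm x₁ x₂] at h₂₁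
  calc _ = 1 / 2 * ((chibarC τ lam x₂ 0 0 + chibarC τ lam x₂ 1 1) * (chibarC τ lam x₁ 1 1 -
        chibarC τ lam x₁ 0 0) - (chibarC τ lam x₁ 0 0 + chibarC τ lam x₁ 1 1) *
        (chibarC τ lam x₂ 1 1 - chibarC τ lam x₂ 0 0)) := by ring
    _ = _ := by
      simp only [chibarC_add lam hτ, chibarC_sub lam hτ]
      linear_combination (1 / 2) * th3 (lam + ηc) τ * th4 (lam + ηc) τ * (h₁₂ - h₂₁)

theorem chibarC_mul_sub_mul_flip (hτ : 0 < τ.im) (x₁ x₂ : ℂ) :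
    chibarC τ lam x₁ 0 0 * chibarC τ lam x₂ 0 0 - chibarC τ lam x₁ 1 1 * chibarC τ lam x₂ 1 1
      = -(th3 (lam + ηc) τ * th4 (lam + ηc) τ) *
        (th4 (-x₂ - x₁ + 2 * ηc) (2 * τ) * th4 (x₂ - x₁) (2 * τ)) := by
  have h₁₂ := th3_sub_ηc_mul_th4_sub_ηc hτ x₁ x₂
  have h₂₁ := th3_sub_ηc_mul_th4_sub_ηc hτ x₂ x₁
  rw [← neg_sub x₂ x₁, th1_neg, th4_neg, neg_sub_comm x₁ x₂] at h₂₁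
  calc _ = -1 / 2 * ((chibarC τ lam x₂ 0 0 + chibarC τ lam x₂ 1 1) * (chibarC τ lam x₁ 1 1 -
        chibarC τ lam x₁ 0 0) + (chibarC τ lam x₁ 0 0 + chibarC τ lam x₁ 1 1) *
        (chibarC τ lam x₂ 1 1 - chibarC τ lam x₂ 0 0)) := by ring
    _ = _ := by
      simp only [chibarC_add lam hτ, chibarC_sub lam hτ]
      linear_combination (-1 / 2) * th3 (lam + ηc) τ * th4 (lam + ηc) τ * (h₁₂ + h₂₁)

theorem differentiable_chiC (hτ : 0 < τ.im) (a b : Fin 2) :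
    Differentiable ℂ fun z => chiC τ lam z a b := by
  have h1 := differentiable_th1 (two_mul_im_pos hτ)
  have h4 := differentiable_th4 (two_mul_im_pos hτ)
  unfold chiC
  split_ifs <;> fun_prop

theorem differentiable_chibarC (hτ : 0 < τ.im) (a b : Fin 2) :
    Differentiable ℂ fun z => chibarC τ lam z a b := by
  have h1 := differentiable_th1 (two_mul_im_pos hτ)
  have h4 := differentiable_th4 (two_mul_im_pos hτ)
  unfold chibarC
  split_ifs <;> fun_prop

theorem chiC_add_pi (τ z : ℂ) (a b : Fin 2) :
    chiC τ lam (z + Real.pi) a b * (spinSign a * spinSign b) = chiC τ lam z a b := by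
  fin_cases a <;> fin_cases b <;>
    simp [chiC, spinSign, add_right_comm z, add_sub_right_comm, th1_add_pi, th4_add_pi]

theorem chibarC_add_pi (τ z : ℂ) (a b : Fin 2) :
    chibarC τ lam (z + Real.pi) a b * (spinSign a * spinSign b) = chibarC τ lam z a b := by
  fin_cases a <;> fin_cases b <;>
    simp [chibarC, spinSign, add_right_comm z, add_sub_right_comm, th1_add_pi, th4_add_pi]

theorem chiC_add_pi_mul (τ z : ℂ) (a b : Fin 2) :
    chiC τ lam (z + Real.pi * τ) (flipS a) (flipS b)
      = -exp (-I * (Real.pi * τ + 2 * z - 2 * ηc)) * chiC τ lam z a b := by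
  have hI := I_mul_exp_mul_I_mul_exp (τ := τ) (z - lam - 2 * ηc) (z + lam)
  rw [show Real.pi * τ + (z - lam - 2 * ηc + (z + lam)) = Real.pi * τ + 2 * z - 2 * ηc by ring]
    at hI
  have hadd : z + Real.pi * τ + lam = z + lam + Real.pi * τ := by ring
  have hsub : z + Real.pi * τ - lam - 2 * ηc = z - lam - 2 * ηc + Real.pi * τ := by ring
  fin_cases a <;> fin_cases b <;>
    simp only [Fin.zero_eta, Fin.mk_one, flipS, if_true, one_ne_zero, if_false, chiC_self,
      mul_zero, chiC_zero_one, chiC_one_zero, hadd, hsub, th1_add_half, th4_add_half, ← hI] <;>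
    ring

theorem chibarC_add_pi_mul (τ z : ℂ) (a b : Fin 2) :
    chibarC τ lam (z + Real.pi * τ) (flipS a) (flipS b)
      = -exp (-I * (Real.pi * τ + 2 * z - 2 * ηc)) * chibarC τ lam z a b := by
  have hI := I_mul_exp_mul_I_mul_exp (τ := τ) (z - lam - 2 * ηc) (z + lam)
  rw [show Real.pi * τ + (z - lam - 2 * ηc + (z + lam)) = Real.pi * τ + 2 * z - 2 * ηc by ring]
    at hI
  have hadd : z + Real.pi * τ + lam = z + lam + Real.pi * τ := by ring
  have hsub : z + Real.pi * τ - lam - 2 * ηc = z - lam - 2 * ηc + Real.pi * τ := by ring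
  fin_cases a <;> fin_cases b <;>
    simp only [Fin.zero_eta, Fin.mk_one, flipS, if_true, one_ne_zero, if_false, ne_eq,
      zero_ne_one, not_false_iff, chibarC_of_ne, mul_zero, chibarC_zero_zero, chibarC_one_one,
      hadd, hsub, th1_add_half, th4_add_half, ← hI] <;>
    ring

theorem cv_add_bv_mul_chiC_add (hτ : 0 < τ.im) (x : ℂ) :
    (cv τ (-2 * x) + bv τ (-2 * x)) * (chiC τ lam (-x) 0 1 + chiC τ lam (-x) 1 0)
      = th4 0 (2 * τ) * th1 (2 * (ηc + x)) (2 * τ) * th4 (2 * (ηc + -x)) (2 * τ)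
        * (chiC τ lam x 0 1 + chiC τ lam x 1 0) := by
  have h := th1_mul_th2 (ηc + x) (ηc + x) hτ
  rw [sub_self, th1_zero, ← two_mul] at h
  rw [cv_add_bv hτ, chiC_add lam hτ, chiC_add lam hτ, ← neg_sub ηc x, ← neg_add', add_comm x,
    th1_neg, th1_neg]
  linear_combination
    -(th4 (2 * (ηc + -x)) (2 * τ) * (th1 (ηc - x) τ * th2 (lam + ηc) τ)) * h

theorem cv_sub_bv_mul_chiC_sub (hτ : 0 < τ.im) (x : ℂ) :
    (cv τ (-2 * x) - bv τ (-2 * x)) * (chiC τ lam (-x) 0 1 - chiC τ lam (-x) 1 0)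
      = th4 0 (2 * τ) * th1 (2 * (ηc + x)) (2 * τ) * th4 (2 * (ηc + -x)) (2 * τ)
        * (chiC τ lam x 0 1 - chiC τ lam x 1 0) := by
  have h := th1_mul_th2 (ηc + x) (ηc + x) hτ
  rw [sub_self, th1_zero, ← two_mul] at h
  rw [cv_sub_bv hτ, chiC_sub lam hτ, chiC_sub lam hτ, ← neg_sub ηc x, ← neg_add', add_comm x,
    th2_neg, th2_neg]
  linear_combination
    th4 (2 * (ηc + -x)) (2 * τ) * (th1 (lam + ηc) τ * th2 (ηc - x) τ) * h

theorem av_add_dv_mul_chibarC_add (hτ : 0 < τ.im) (x : ℂ) :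
    (av τ (-2 * x) + dv τ (-2 * x)) * (chibarC τ lam (-x) 0 0 + chibarC τ lam (-x) 1 1)
      = th4 0 (2 * τ) * th4 (2 * (ηc + x)) (2 * τ) * th1 (2 * (ηc + -x)) (2 * τ)
        * (chibarC τ lam x 0 0 + chibarC τ lam x 1 1) := by
  have h := th3_mul_th4 (ηc + x) (ηc + x) hτ
  rw [sub_self, th1_zero, ← two_mul] at h
  rw [av_add_dv hτ, chibarC_add lam hτ, chibarC_add lam hτ, ← neg_sub ηc x, ← neg_add',
    add_comm x, th4_neg, th4_neg]
  linear_combination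
    th1 (2 * (ηc + -x)) (2 * τ) * (th3 (lam + ηc) τ * th4 (ηc - x) τ) * h

theorem av_sub_dv_mul_chibarC_sub (hτ : 0 < τ.im) (x : ℂ) :
    (av τ (-2 * x) - dv τ (-2 * x)) * (chibarC τ lam (-x) 1 1 - chibarC τ lam (-x) 0 0)
      = th4 0 (2 * τ) * th4 (2 * (ηc + x)) (2 * τ) * th1 (2 * (ηc + -x)) (2 * τ)
        * (chibarC τ lam x 1 1 - chibarC τ lam x 0 0) := by
  have h := th3_mul_th4 (ηc + x) (ηc + x) hτ
  rw [sub_self, th1_zero, ← two_mul] at h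
  rw [av_sub_dv hτ, chibarC_sub lam hτ, chibarC_sub lam hτ, ← neg_sub ηc x, ← neg_add',
    add_comm x, th3_neg, th3_neg]
  linear_combination
    th1 (2 * (ηc + -x)) (2 * τ) * (th3 (ηc - x) τ * th4 (lam + ηc) τ) * h

theorem pairRc_chiC (hτ : 0 < τ.im) (x : ℂ) (a b : Fin 2) :
    pairRc τ (-2 * x) (chiC τ lam (-x)) a b
      = th4 0 (2 * τ) * th1 (2 * (ηc + x)) (2 * τ) * th4 (2 * (ηc + -x)) (2 * τ)
        * chiC τ lam x a b := by
  have hadd := cv_add_bv_mul_chiC_add lam hτ x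
  have hsub := cv_sub_bv_mul_chiC_sub lam hτ x
  fin_cases a <;> fin_cases b <;>
    simp only [pairRc, Rcheckent, Rent, Fin.sum_univ_two, Fin.zero_eta, Fin.mk_one, Prod.mk.injEq,
      zero_ne_one, one_ne_zero, and_true, and_false, if_true, if_false, chiC_self, mul_zero,
      zero_mul, add_zero, zero_add]
  · linear_combination (hadd + hsub) / 2
  · linear_combination (hadd - hsub) / 2

theorem pairRc_chibarC (hτ : 0 < τ.im) (x : ℂ) (a b : Fin 2) :
    pairRc τ (-2 * x) (chibarC τ lam (-x)) a b
      = th4 0 (2 * τ) * th4 (2 * (ηc + x)) (2 * τ) * th1 (2 * (ηc + -x)) (2 * τ)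
        * chibarC τ lam x a b := by
  have hadd := av_add_dv_mul_chibarC_add lam hτ x
  have hsub := av_sub_dv_mul_chibarC_sub lam hτ x
  fin_cases a <;> fin_cases b <;>
    simp only [pairRc, Rcheckent, Rent, Fin.sum_univ_two, Fin.zero_eta, Fin.mk_one, Prod.mk.injEq,
      zero_ne_one, one_ne_zero, and_true, and_false, if_true, if_false, chibarC_of_ne, mul_zero,
      ne_eq, not_false_iff, zero_mul, add_zero, zero_add]
  · linear_combination (hadd - hsub) / 2
  · linear_combination (hadd + hsub) / 2

theorem boundaryYangBaxter_chiC (hτ : 0 < τ.im) (x₁ x₂ : ℂ) :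
    BoundaryYangBaxter τ x₁ x₂ (chiC τ lam x₁) (chiC τ lam x₂) := by
  have hda : dv τ (-x₂ - x₁) * av τ (x₂ - x₁) *
      (chiC τ lam x₂ 0 1 * chiC τ lam x₁ 1 0 - chiC τ lam x₁ 0 1 * chiC τ lam x₂ 1 0)
      = bv τ (-x₂ - x₁) * dv τ (x₂ - x₁) *
      (chiC τ lam x₁ 0 1 * chiC τ lam x₂ 0 1 - chiC τ lam x₁ 1 0 * chiC τ lam x₂ 1 0) := by
    rw [chiC_mul_sub_mul_swap lam hτ, chiC_mul_sub_mul_flip lam hτ, av, bv, dv, dv]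
    ring
  have hac : av τ (-x₂ - x₁) * cv τ (x₂ - x₁) *
      (chiC τ lam x₂ 0 1 * chiC τ lam x₁ 1 0 - chiC τ lam x₁ 0 1 * chiC τ lam x₂ 1 0)
      = cv τ (-x₂ - x₁) * bv τ (x₂ - x₁) *
      (chiC τ lam x₁ 0 1 * chiC τ lam x₂ 0 1 - chiC τ lam x₁ 1 0 * chiC τ lam x₂ 1 0) := by
    rw [chiC_mul_sub_mul_swap lam hτ, chiC_mul_sub_mul_flip lam hτ, av, bv, cv, cv]
    ring
  intro a b c d
  fin_cases a <;> fin_cases b <;> fin_cases c <;> fin_cases d <;>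
    simp only [Rcheckent, Rent, Fin.sum_univ_two, Fin.zero_eta, Fin.mk_one, Prod.mk.injEq,
      zero_ne_one, one_ne_zero, and_true, and_false, if_true, if_false, chiC_self, mul_zero,
      zero_mul, add_zero, zero_add] <;>
    grind

theorem boundaryYangBaxter_chibarC (hτ : 0 < τ.im) (x₁ x₂ : ℂ) :
    BoundaryYangBaxter τ x₁ x₂ (chibarC τ lam x₁) (chibarC τ lam x₂) := by
  have hca : cv τ (-x₂ - x₁) * av τ (x₂ - x₁) *
      (chibarC τ lam x₂ 0 0 * chibarC τ lam x₁ 1 1 - chibarC τ lam x₁ 0 0 * chibarC τ lam x₂ 1 1)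
      = av τ (-x₂ - x₁) * dv τ (x₂ - x₁) * (chibarC τ lam x₁ 0 0 * chibarC τ lam x₂ 0 0
        - chibarC τ lam x₁ 1 1 * chibarC τ lam x₂ 1 1) := by
    rw [chibarC_mul_sub_mul_swap lam hτ, chibarC_mul_sub_mul_flip lam hτ, av, av, cv, dv]
    ring
  have hbc : bv τ (-x₂ - x₁) * cv τ (x₂ - x₁) *
      (chibarC τ lam x₂ 0 0 * chibarC τ lam x₁ 1 1 - chibarC τ lam x₁ 0 0 * chibarC τ lam x₂ 1 1)
      = dv τ (-x₂ - x₁) * bv τ (x₂ - x₁) * (chibarC τ lam x₁ 0 0 * chibarC τ lam x₂ 0 0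
        - chibarC τ lam x₁ 1 1 * chibarC τ lam x₂ 1 1) := by
    rw [chibarC_mul_sub_mul_swap lam hτ, chibarC_mul_sub_mul_flip lam hτ, bv, bv, cv, dv]
    ring
  intro a b c d
  fin_cases a <;> fin_cases b <;> fin_cases c <;> fin_cases d <;>
    simp only [Rcheckent, Rent, Fin.sum_univ_two, Fin.zero_eta, Fin.mk_one, Prod.mk.injEq,
      zero_ne_one, one_ne_zero, and_true, and_false, if_true, if_false, chibarC_of_ne, ne_eq,
      not_false_iff, mul_zero, zero_mul, add_zero, zero_add] <;>
    grind

theorem isBoundaryKernel_chiC (hτ : 0 < τ.im) :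
    IsBoundaryKernel τ (chiC τ lam) fun x => th4 (2 * (ηc + x)) (2 * τ) where
  differentiable := differentiable_chiC lam hτ
  add_pi := chiC_add_pi lam τ
  add_pi_mul := chiC_add_pi_mul lam τ
  reflection := by
    have h1 := differentiable_th1 (two_mul_im_pos hτ)
    obtain ⟨z, hz⟩ := exists_th1_two_mul_ηc_add_ne_zero hτ
    exact ⟨fun x => th4 0 (2 * τ) * th1 (2 * (ηc + x)) (2 * τ), by fun_prop,
      ⟨z, mul_ne_zero (th4_zero_ne_zero (two_mul_im_pos hτ)) hz⟩,
      fun x => ⟨rv_neg_two_mul hτ x, pairRc_chiC lam hτ x⟩⟩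
  exchange := boundaryYangBaxter_chiC lam hτ

theorem isBoundaryKernel_chibarC (hτ : 0 < τ.im) :
    IsBoundaryKernel τ (chibarC τ lam) fun x => th1 (2 * (ηc + x)) (2 * τ) where
  differentiable := differentiable_chibarC lam hτ
  add_pi := chibarC_add_pi lam τ
  add_pi_mul := chibarC_add_pi_mul lam τ
  reflection := by
    have h4 := differentiable_th4 (two_mul_im_pos hτ)
    obtain ⟨z, hz⟩ := exists_th4_two_mul_ηc_add_ne_zero hτ
    exact ⟨fun x => th4 0 (2 * τ) * th4 (2 * (ηc + x)) (2 * τ), by fun_prop,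
      ⟨z, mul_ne_zero (th4_zero_ne_zero (two_mul_im_pos hτ)) hz⟩,
      fun x => ⟨(rv_neg_two_mul hτ x).trans (mul_right_comm _ _ _), pairRc_chibarC lam hτ x⟩⟩
  exchange := boundaryYangBaxter_chibarC lam hτ

end BoundaryVectors

/-! ### Sites of the chain -/

section Sites

open Function

variable {n : ℕ}

/-- The first site `2m` of the `m`-th pair of neighbouring sites. -/
def siteL (m : Fin n) : Fin (2 * n + 1) := ⟨2 * m, by omega⟩

/-- The second site `2m + 1` of the `m`-th pair of neighbouring sites. -/
def siteR (m : Fin n) : Fin (2 * n + 1) := ⟨2 * m + 1, by omega⟩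

/-- The unpaired last site. -/
def siteLast (n : ℕ) : Fin (2 * n + 1) := ⟨2 * n, by omega⟩

theorem siteL_inj {m m' : Fin n} : siteL m = siteL m' ↔ m = m' := by
  grind [siteL]

theorem siteR_inj {m m' : Fin n} : siteR m = siteR m' ↔ m = m' := by
  grind [siteR]

theorem siteL_ne_siteR (m m' : Fin n) : siteL m ≠ siteR m' := by
  grind [siteL, siteR]

theorem siteL_ne_siteLast (m : Fin n) : siteL m ≠ siteLast n := by
  grind [siteL, siteLast]

theorem siteR_ne_siteLast (m : Fin n) : siteR m ≠ siteLast n := by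
  grind [siteR, siteLast]

theorem site_cases (i : Fin (2 * n + 1)) :
    (∃ m, i = siteL m) ∨ (∃ m, i = siteR m) ∨ i = siteLast n := by
  by_cases h : (i : ℕ) = 2 * n
  · exact Or.inr (Or.inr (Fin.ext h))
  · rcases Nat.even_or_odd' (i : ℕ) with ⟨c, hc | hc⟩
    · exact Or.inl ⟨⟨c, by omega⟩, Fin.ext hc⟩
    · exact Or.inr (Or.inl ⟨⟨c, by omega⟩, Fin.ext hc⟩)

theorem interleave_siteL (x : Fin n → ℂ) (m : Fin n) : interleave x (siteL m) = x m := by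
  simp [interleave, siteL]

theorem interleave_siteR (x : Fin n → ℂ) (m : Fin n) : interleave x (siteR m) = -x m := by
  have hdiv : (2 * (m : ℕ) + 1) / 2 = m := by omega
  have hlt : 2 * (m : ℕ) + 1 < 2 * n := by omega
  simp [interleave, siteR, hdiv, hlt, Nat.add_mod]

theorem interleave_siteLast (x : Fin n → ℂ) : interleave x (siteLast n) = 0 := by
  simp [interleave, siteLast]

theorem interleave_update (x : Fin n → ℂ) (m : Fin n) (z : ℂ) :
    interleave (update x m z) = update (update (interleave x) (siteL m) z) (siteR m) (-z) := by
  funext i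
  rcases site_cases i with ⟨m', rfl⟩ | ⟨m', rfl⟩ | rfl
  · simp only [interleave_siteL, update_apply, siteL_ne_siteR, siteL_inj, if_false]
  · simp only [interleave_siteR, update_apply, (siteL_ne_siteR _ _).symm, siteR_inj, if_false]
    split_ifs <;> rfl
  · simp only [interleave_siteLast, update_apply, (siteL_ne_siteLast _).symm,
      (siteR_ne_siteLast _).symm, if_false]

theorem interleave_update_neg (x : Fin n → ℂ) (m : Fin n) (l : Fin (2 * n + 1)) :
    interleave (update x m (-x m)) l = interleave x (Equiv.swap (siteL m) (siteR m) l) := by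
  rw [interleave_update]
  simp only [update_apply, Equiv.swap_apply_def]
  split_ifs with h₁ h₂ h₂
  · exact absurd (h₂.symm.trans h₁) (siteL_ne_siteR m m)
  · rw [interleave_siteL, neg_neg]
  · rw [interleave_siteR]
  · rfl

theorem sum_update_update {ι : Type*} [Fintype ι] [DecidableEq ι] {i j : ι} (hij : i ≠ j)
    (u : ι → ℂ) (z w : ℂ) :
    ∑ l, update (update u i z) j w l = z + w + ∑ l ∈ (Finset.univ.erase j).erase i, u l := by
  rw [← Finset.add_sum_erase _ _ (Finset.mem_univ j), update_self,
    ← Finset.add_sum_erase _ _ (Finset.mem_erase.2 ⟨hij, Finset.mem_univ i⟩),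
    update_of_ne hij, update_self, ← add_assoc, add_comm w]
  congr 1
  refine Finset.sum_congr rfl fun l hl => ?_
  rw [update_of_ne (Finset.ne_of_mem_erase (Finset.mem_of_mem_erase hl)),
    update_of_ne (Finset.ne_of_mem_erase hl)]

end Sites

/-! ### Analytic properties of the vectors `Ψ_n` -/

section PsiFamily

open Function

variable {τ : ℂ} {Ψ : PsiFam} {n : ℕ}

theorem spinSign_mul_self (s : Fin 2) : spinSign s * spinSign s = 1 := by
  fin_cases s <;> simp [spinSign]

theorem prod_spinSign_ne_zero {ι : Type*} (s : Finset ι) (α : ι → Fin 2) :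
    ∏ j ∈ s, spinSign (α j) ≠ 0 :=
  Finset.prod_ne_zero_iff.2 fun j _ => left_ne_zero_of_mul_eq_one (spinSign_mul_self (α j))

theorem prod_erase_spinSign {ι : Type*} [DecidableEq ι] {s : Finset ι} {i : ι} (hi : i ∈ s)
    (α : ι → Fin 2) :
    ∏ j ∈ s.erase i, spinSign (α j) = spinSign (α i) * ∏ j ∈ s, spinSign (α j) := by
  rw [← Finset.mul_prod_erase s _ hi, ← mul_assoc, spinSign_mul_self, one_mul]

theorem Psi_update_add_pi (h3 : PsiP3 τ Ψ) (u : Fin (2 * n + 1) → ℂ) (i : Fin (2 * n + 1))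
    (w : ℂ) (α : Fin (2 * n + 1) → Fin 2) :
    Ψ n (update u i (w + Real.pi)) α
      = (∏ j ∈ Finset.univ.erase i, spinSign (α j)) * Ψ n (update u i w) α := by
  simpa [spinSign] using congrFun (h3 n (update u i w) i).1 α

theorem Psi_update_add_two_pi_mul (h3 : PsiP3 τ Ψ) (u : Fin (2 * n + 1) → ℂ)
    (i : Fin (2 * n + 1)) (w : ℂ) (α : Fin (2 * n + 1) → Fin 2) :
    Ψ n (update u i (w + 2 * Real.pi * τ)) α
      = (pnome τ ^ (4 * n))⁻¹ * exp (-2 * I * ((2 * n + 1) * w - ∑ j, update u i w j)) *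
        Ψ n (update u i w) α := by
  simpa [Finset.sum_sub_distrib] using congrFun (h3 n (update u i w) i).2 α

theorem Psi_update_flipS (h2 : PsiP2 τ Ψ) (u : Fin (2 * n + 1) → ℂ) (i : Fin (2 * n + 1))
    (w : ℂ) (α : Fin (2 * n + 1) → Fin 2) :
    Ψ n (update u i w) (update α i (flipS (α i)))
      = (-(pnome τ)) ^ n * exp (-I * (∑ j, update u i w j - (2 * n + 1) * w)) *
        Ψ n (update u i (w + Real.pi * τ)) α := by
  simpa [Finset.sum_sub_distrib] using h2 n (update u i w) i α

theorem Psi_interleave_add_pi (h3 : PsiP3 τ Ψ) (x : Fin n → ℂ) (m : Fin n) (z : ℂ)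
    (α : Fin (2 * n + 1) → Fin 2) :
    Ψ n (interleave (update x m (z + Real.pi))) α
      = spinSign (α (siteL m)) * spinSign (α (siteR m)) * Ψ n (interleave (update x m z)) α := by
  have hR := Psi_update_add_pi h3 (update (interleave x) (siteL m) (z + Real.pi)) (siteR m)
    (-(z + Real.pi)) α
  have hL := Psi_update_add_pi h3 (update (interleave x) (siteR m) (-z)) (siteL m) z α
  rw [update_comm (siteL_ne_siteR m m).symm, update_comm (siteL_ne_siteR m m).symm,
    ← interleave_update, prod_erase_spinSign (Finset.mem_univ _)] at hL
  rw [← interleave_update, neg_add, neg_add_cancel_right, hL,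
    prod_erase_spinSign (Finset.mem_univ _)] at hR
  refine mul_left_cancel₀ (prod_spinSign_ne_zero Finset.univ α) ?_
  linear_combination -spinSign (α (siteR m)) * hR - (∏ j, spinSign (α j)) *
    Ψ n (interleave (update x m (z + Real.pi))) α * spinSign_mul_self (α (siteR m))

theorem Psi_interleave_add_pi_mul (h2 : PsiP2 τ Ψ) (x : Fin n → ℂ) (m : Fin n) (z : ℂ)
    (α : Fin (2 * n + 1) → Fin 2) :
    Ψ n (interleave (update x m (z + Real.pi * τ))) (update α (siteR m) (flipS (α (siteR m))))
      = exp (-I * ((2 * n + 1) * (2 * z + Real.pi * τ))) *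
        Ψ n (interleave (update x m z)) (update α (siteL m) (flipS (α (siteL m)))) := by
  have hR := Psi_update_flipS h2 (update (interleave x) (siteL m) (z + Real.pi * τ)) (siteR m)
    (-(z + Real.pi * τ)) α
  have hL := Psi_update_flipS h2 (update (interleave x) (siteR m) (-z)) (siteL m) z α
  rw [update_comm (siteL_ne_siteR m m).symm, update_comm (siteL_ne_siteR m m).symm,
    sum_update_update (siteL_ne_siteR m m), add_neg_cancel, zero_add] at hL
  rw [sum_update_update (siteL_ne_siteR m m), add_neg_cancel, zero_add, neg_add,
    neg_add_cancel_right, ← neg_add] at hR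
  have hexp (T : ℂ) : exp (-I * (T - (2 * n + 1) * -(z + Real.pi * τ)))
      = exp (-I * ((2 * n + 1) * (2 * z + Real.pi * τ))) *
        exp (-I * (T - (2 * n + 1) * z)) := by
    rw [← exp_add]
    ring_nf
  rw [interleave_update, interleave_update, hR, hL, hexp]
  ring

theorem differentiable_Psi_update_update_neg (hτ : 0 < τ.im) (hent : PsiEntire Ψ)
    (h3 : PsiP3 τ Ψ) (u : Fin (2 * n + 1) → ℂ) {i j : Fin (2 * n + 1)} (hij : i ≠ j)
    (α : Fin (2 * n + 1) → Fin 2) :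
    Differentiable ℂ fun z => Ψ n (update (update u i z) j (-z)) α := by
  set T : ℂ := ∑ l ∈ (Finset.univ.erase j).erase i, u l
  have hb : (pnome τ ^ (4 * n))⁻¹ * exp (2 * I * T) ≠ 0 :=
    mul_ne_zero (inv_ne_zero (pow_ne_zero _ (exp_ne_zero _))) (exp_ne_zero _)
  refine differentiable_apply_neg (f := fun z w => Ψ n (update (update u i z) j w) α) (m := 2 * n)
    (two_mul_im_pos hτ) (prod_spinSign_ne_zero (Finset.univ.erase j) α) hb (fun w => ?_)
    fun z => ⟨hent n _ j α, fun w => Psi_update_add_pi h3 _ j w α, fun w => ?_⟩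
  · simp only [update_comm hij]
    exact hent n _ i α
  · have hexp : exp (-2 * I * ((2 * n + 1) * w - (z + w + T)))
        = exp (2 * I * T) * exp (2 * I * z) * exp (-2 * I * ((2 * n : ℕ) * w)) := by
      rw [← exp_add, ← exp_add]
      push_cast
      ring_nf
    beta_reduce
    rw [mul_left_comm (Real.pi : ℂ) 2 τ, ← mul_assoc, Psi_update_add_two_pi_mul h3,
      sum_update_update hij, hexp]
    ring

theorem Psi_interleave_neg_ηc_eq_zero (h3 : PsiP3 τ Ψ) (h4 : PsiP4 Ψ) (x : Fin n → ℂ) (m : Fin n)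
    (α : Fin (2 * n + 1) → Fin 2) : Ψ n (interleave (update x m (-ηc))) α = 0 := by
  set u := interleave (update x m (-ηc)) with hu
  have hL : u (siteL m) = -ηc := by rw [hu, interleave_siteL, update_self]
  have hR : u (siteR m) = ηc := by rw [hu, interleave_siteR, update_self, neg_neg]
  have hlast : u (siteLast n) = 0 := interleave_siteLast _
  have hLR : siteL m < siteR m := Nat.lt_succ_self _
  have hRlast : siteR m < siteLast n := by grind [siteR, siteLast]
  -- Since `3η = π`, the last parameter completes the wheel `-η, η, 3η` after a shift by `π`.
  have hwheel : Ψ n (update u (siteLast n) (u (siteLast n) + Real.pi)) = 0 := by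
    refine h4 n _ ⟨siteL m, siteR m, siteLast n, hLR, hRlast, ?_, ?_⟩
    · rw [update_of_ne (siteL_ne_siteLast m), update_of_ne (siteR_ne_siteLast m), hL, hR]
      ring
    · rw [update_of_ne (siteL_ne_siteLast m), update_self, hL, hlast, ← three_mul_ηc]
      ring
  have hshift := Psi_update_add_pi h3 u (siteLast n) (u (siteLast n)) α
  rw [hwheel, update_eq_self, Pi.zero_apply] at hshift
  exact (mul_eq_zero.1 hshift.symm).resolve_left (prod_spinSign_ne_zero _ α)

end PsiFamily

/-! ### Scalar products with boundary vectors -/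

section BoundarySum

open Function

/-- The components of the tensor product of the boundary vectors `k (x m)` over the pairs of sites
`m ∈ S` and of the vector `v` at the last site, as a function of the spin configuration `α`. -/
def boundaryWeight (k : ℂ → Fin 2 → Fin 2 → ℂ) (v : Fin 2 → ℂ) {n : ℕ} (S : Finset (Fin n))
    (x : Fin n → ℂ) (α : Fin (2 * n + 1) → Fin 2) : ℂ :=
  (∏ m ∈ S, k (x m) (α (siteL m)) (α (siteR m))) * v (α (siteLast n))

/-- The scalar product of `k(x₁) ⊗ ⋯ ⊗ k(x_n) ⊗ v` with `Ψ_n(x₁, -x₁, …, x_n, -x_n, 0)`, of which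
`Z_n` and `Z̄_n^±` are instances. -/
def boundarySum (k : ℂ → Fin 2 → Fin 2 → ℂ) (v : Fin 2 → ℂ) (Ψ : PsiFam) (n : ℕ)
    (x : Fin n → ℂ) : ℂ :=
  ∑ α, boundaryWeight k v Finset.univ x α * Ψ n (interleave x) α

variable {τ : ℂ} {k : ℂ → Fin 2 → Fin 2 → ℂ} {G : ℂ → ℂ} {v : Fin 2 → ℂ} {Ψ : PsiFam} {n : ℕ}
  {S : Finset (Fin n)}

theorem boundaryWeight_eq_mul_erase {m : Fin n} (hm : m ∈ S) (x : Fin n → ℂ)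
    (α : Fin (2 * n + 1) → Fin 2) :
    boundaryWeight k v S x α
      = k (x m) (α (siteL m)) (α (siteR m)) * boundaryWeight k v (S.erase m) x α := by
  rw [boundaryWeight, boundaryWeight, ← Finset.mul_prod_erase S _ hm, mul_assoc]

theorem boundaryWeight_congr {x y : Fin n → ℂ} (h : ∀ m ∈ S, x m = y m)
    (α : Fin (2 * n + 1) → Fin 2) : boundaryWeight k v S x α = boundaryWeight k v S y α := by
  rw [boundaryWeight, boundaryWeight, Finset.prod_congr rfl fun m hm => by rw [h m hm]]

theorem boundaryWeight_update_siteL {m : Fin n} (hm : m ∉ S) (x : Fin n → ℂ)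
    (α : Fin (2 * n + 1) → Fin 2) (s : Fin 2) :
    boundaryWeight k v S x (update α (siteL m) s) = boundaryWeight k v S x α := by
  rw [boundaryWeight, boundaryWeight, update_of_ne (siteL_ne_siteLast m).symm]
  congr 1
  refine Finset.prod_congr rfl fun m' hm' => ?_
  rw [update_of_ne (mt siteL_inj.1 (ne_of_mem_of_not_mem hm' hm)),
    update_of_ne (siteL_ne_siteR _ _).symm]

theorem boundaryWeight_update_siteR {m : Fin n} (hm : m ∉ S) (x : Fin n → ℂ)
    (α : Fin (2 * n + 1) → Fin 2) (s : Fin 2) :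
    boundaryWeight k v S x (update α (siteR m) s) = boundaryWeight k v S x α := by
  rw [boundaryWeight, boundaryWeight, update_of_ne (siteR_ne_siteLast m).symm]
  congr 1
  refine Finset.prod_congr rfl fun m' hm' => ?_
  rw [update_of_ne (siteL_ne_siteR _ _),
    update_of_ne (mt siteR_inj.1 (ne_of_mem_of_not_mem hm' hm))]

theorem boundarySum_update (Ψ : PsiFam) (x : Fin n → ℂ) (m : Fin n) (z : ℂ) :
    boundarySum k v Ψ n (update x m z)
      = ∑ α, k z (α (siteL m)) (α (siteR m)) * boundaryWeight k v (Finset.univ.erase m) x α *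
          Ψ n (interleave (update x m z)) α := by
  refine Finset.sum_congr rfl fun α _ => ?_
  rw [boundaryWeight_eq_mul_erase (Finset.mem_univ m), update_self]
  congr 2
  exact boundaryWeight_congr (fun m' hm' => update_of_ne (Finset.ne_of_mem_erase hm') _ _) α

theorem boundarySum_add_pi (hk : IsBoundaryKernel τ k G) (h3 : PsiP3 τ Ψ) (x : Fin n → ℂ)
    (m : Fin n) (z : ℂ) :
    boundarySum k v Ψ n (update x m (z + Real.pi)) = boundarySum k v Ψ n (update x m z) := by
  rw [boundarySum_update, boundarySum_update]
  refine Finset.sum_congr rfl fun α _ => ?_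
  rw [Psi_interleave_add_pi h3, ← hk.add_pi z]
  ring

theorem flipS_flipS (s : Fin 2) : flipS (flipS s) = s := by
  fin_cases s <;> rfl

theorem boundarySum_add_pi_mul (hk : IsBoundaryKernel τ k G) (h2 : PsiP2 τ Ψ) (x : Fin n → ℂ)
    (m : Fin n) (z : ℂ) :
    boundarySum k v Ψ n (update x m (z + Real.pi * τ))
      = -exp (-I * ((2 * n + 2) * (2 * z + Real.pi * τ) - 2 * ηc)) *
        boundarySum k v Ψ n (update x m z) := by
  let flipPair : (Fin (2 * n + 1) → Fin 2) → Fin (2 * n + 1) → Fin 2 := fun α =>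
    update (update α (siteL m) (flipS (α (siteL m)))) (siteR m) (flipS (α (siteR m)))
  have hflip : Involutive flipPair := by
    intro α
    funext l
    simp only [flipPair, update_apply, siteL_ne_siteR, (siteL_ne_siteR _ _).symm, if_true,
      if_false, flipS_flipS]
    split_ifs <;> simp [*]
  have hexp : exp (-I * ((2 * n + 2) * (2 * z + Real.pi * τ) - 2 * ηc))
      = exp (-I * (Real.pi * τ + 2 * z - 2 * ηc)) *
        exp (-I * ((2 * n + 1) * (2 * z + Real.pi * τ))) := by
    rw [← exp_add]
    ring_nf
  rw [boundarySum_update, boundarySum_update, Finset.mul_sum]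
  refine (Equiv.sum_comp hflip.toPerm _).symm.trans (Finset.sum_congr rfl fun α _ => ?_)
  have hΨ := Psi_interleave_add_pi_mul h2 x m z (update α (siteL m) (flipS (α (siteL m))))
  rw [update_of_ne (siteL_ne_siteR m m).symm, update_self, update_idem, flipS_flipS,
    update_eq_self] at hΨ
  rw [hflip.coe_toPerm]
  simp only [flipPair]
  rw [hΨ, boundaryWeight_update_siteR (Finset.notMem_erase m _),
    boundaryWeight_update_siteL (Finset.notMem_erase m _), update_self,
    update_of_ne (siteL_ne_siteR m m), update_self, hk.add_pi_mul, hexp]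
  ring

theorem boundarySum_neg_ηc (h3 : PsiP3 τ Ψ) (h4 : PsiP4 Ψ) (x : Fin n → ℂ) (m : Fin n) :
    boundarySum k v Ψ n (update x m (-ηc)) = 0 :=
  Finset.sum_eq_zero fun α _ => by rw [Psi_interleave_neg_ηc_eq_zero h3 h4, mul_zero]

theorem differentiable_boundarySum (hτ : 0 < τ.im) (hk : IsBoundaryKernel τ k G)
    (hent : PsiEntire Ψ) (h3 : PsiP3 τ Ψ) (x : Fin n → ℂ) (m : Fin n) :
    Differentiable ℂ fun z => boundarySum k v Ψ n (update x m z) := by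
  simp only [boundarySum_update, interleave_update]
  exact Differentiable.fun_sum fun α _ => ((hk.differentiable _ _).mul_const _).mul
    (differentiable_Psi_update_update_neg hτ hent h3 _ (siteL_ne_siteR m m) α)

theorem boundarySum_slice_mem_thetaSpace (hτ : 0 < τ.im) (hk : IsBoundaryKernel τ k G)
    (hent : PsiEntire Ψ) (h2 : PsiP2 τ Ψ) (h3 : PsiP3 τ Ψ) (x : Fin n → ℂ) (m : Fin n) :
    (fun z => boundarySum k v Ψ n (update x m z)) ∈
      thetaSpace τ 1 (-exp (-I * ((2 * n + 2) * (Real.pi * τ) - 2 * ηc))) (2 * n + 2) := by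
  refine ⟨differentiable_boundarySum hτ hk hent h3 x m, fun z => ?_, fun z => ?_⟩
  · beta_reduce
    rw [boundarySum_add_pi hk h3, one_mul]
  · beta_reduce
    rw [boundarySum_add_pi_mul hk h2, neg_mul, neg_mul, neg_mul, ← exp_add]
    push_cast
    ring_nf

theorem Rcheckent_comm (τ u : ℂ) (p q : Fin 2 × Fin 2) :
    Rcheckent τ u p q = Rcheckent τ u q p := by
  obtain ⟨a, b⟩ := p
  obtain ⟨c, d⟩ := q
  fin_cases a <;> fin_cases b <;> fin_cases c <;> fin_cases d <;> simp [Rcheckent, Rent]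

theorem sum_mul_applyRc (τ u : ℂ) {L : ℕ} {i j : Fin L} (hij : i ≠ j)
    (w ψ : (Fin L → Fin 2) → ℂ) :
    ∑ α, w α * applyRc τ u i j ψ α = ∑ α, applyRc τ u i j w α * ψ α := by
  simp only [applyRc, Finset.mul_sum, Finset.sum_mul, ← Fintype.sum_prod_type']
  let exchange : (Fin L → Fin 2) × Fin 2 × Fin 2 → (Fin L → Fin 2) × Fin 2 × Fin 2 := fun p =>
    (update (update p.1 i p.2.1) j p.2.2, p.1 i, p.1 j)
  have hexchange : Involutive exchange := by
    rintro ⟨α, s, t⟩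
    simp only [exchange, Prod.mk.injEq, update_self, update_of_ne hij, and_true]
    funext l
    simp only [update_apply]
    split_ifs <;> simp [*]
  refine Fintype.sum_equiv hexchange.toPerm _ _ ?_
  rintro ⟨α, s, t⟩
  have hfst := congrArg Prod.fst (hexchange (α, s, t))
  simp only [exchange] at hfst
  simp only [Involutive.coe_toPerm, exchange, hfst, update_self, update_of_ne hij]
  rw [Rcheckent_comm]
  ring

theorem applyRc_mul_of_invariant (τ u : ℂ) {L : ℕ} {i j : Fin L} (hij : i ≠ j)
    (F : Fin 2 → Fin 2 → ℂ) (w : (Fin L → Fin 2) → ℂ) (hi : ∀ α s, w (update α i s) = w α)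
    (hj : ∀ α s, w (update α j s) = w α) (α : Fin L → Fin 2) :
    applyRc τ u i j (fun α => F (α i) (α j) * w α) α = pairRc τ u F (α i) (α j) * w α := by
  simp only [applyRc, pairRc, hi, hj, update_self, update_of_ne hij, Finset.sum_mul, mul_assoc]

theorem rv_mul_sum_mul_Psi_swap (h1 : PsiP1 τ Ψ) {i j : Fin (2 * n + 1)}
    (hij : (j : ℕ) = (i : ℕ) + 1) {u u' : Fin (2 * n + 1) → ℂ}
    (hu : ∀ l, u' l = u (Equiv.swap i j l)) {s : ℂ} (hs : u j - u i = s)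
    (w : (Fin (2 * n + 1) → Fin 2) → ℂ) :
    rv τ s * ∑ α, w α * Ψ n u' α = ∑ α, applyRc τ s i j w α * Ψ n u α := by
  have hne : i ≠ j := by grind
  rw [← sum_mul_applyRc τ _ hne, ← hs, h1 n u i j hij, funext hu, Finset.mul_sum]
  exact Finset.sum_congr rfl fun α _ => mul_left_comm _ _ _

theorem rv_mul_boundarySum_update_neg (h1 : PsiP1 τ Ψ) (x : Fin n → ℂ) (m : Fin n) {g : ℂ}
    (hk : ∀ a b, pairRc τ (-2 * x m) (k (-x m)) a b = g * k (x m) a b) :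
    rv τ (-2 * x m) * boundarySum k v Ψ n (update x m (-x m)) = g * boundarySum k v Ψ n x := by
  have hs : interleave x (siteR m) - interleave x (siteL m) = -2 * x m := by
    rw [interleave_siteL, interleave_siteR]
    ring
  rw [boundarySum_update, rv_mul_sum_mul_Psi_swap h1 rfl (interleave_update_neg x m) hs
    fun α => k (-x m) (α (siteL m)) (α (siteR m)) * boundaryWeight k v (Finset.univ.erase m) x α,
    boundarySum, Finset.mul_sum]
  refine Finset.sum_congr rfl fun α _ => ?_
  rw [applyRc_mul_of_invariant τ _ (siteL_ne_siteR m m) (k (-x m)) _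
    (boundaryWeight_update_siteL (Finset.notMem_erase m _) x)
    (boundaryWeight_update_siteR (Finset.notMem_erase m _) x), hk,
    boundaryWeight_eq_mul_erase (Finset.mem_univ m)]
  ring

theorem boundarySum_update_neg (hτ : 0 < τ.im) (hk : IsBoundaryKernel τ k G)
    (hG : Differentiable ℂ G) (hent : PsiEntire Ψ) (h1 : PsiP1 τ Ψ) (h3 : PsiP3 τ Ψ)
    (x : Fin n → ℂ) (m : Fin n) (z : ℂ) :
    G z * boundarySum k v Ψ n (update x m (-z))
      = G (-z) * boundarySum k v Ψ n (update x m z) := by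
  obtain ⟨c, hc, hc0, hreflection⟩ := hk.reflection
  have hZ := differentiable_boundarySum (v := v) hτ hk hent h3 x m
  refine eq_of_entire_mul_left_eq hc (hG.mul (hZ.comp differentiable_neg))
    ((hG.comp differentiable_neg).mul hZ) hc0 (fun z => ?_) z
  have h := rv_mul_boundarySum_update_neg (k := k) (v := v) h1 (update x m z) m
    (g := c z * G (-z)) (by rw [update_self]; exact (hreflection z).2)
  rwa [update_self, update_idem, (hreflection z).1, mul_assoc, mul_assoc] at h

end BoundarySum

/-! ### Exchange of pairs -/

section Exchange

open Function

variable {τ : ℂ} {k : ℂ → Fin 2 → Fin 2 → ℂ} {G : ℂ → ℂ} {v : Fin 2 → ℂ} {Ψ : PsiFam} {n : ℕ}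

theorem applyRc_applyRc_left (τ s t : ℂ) {L : ℕ} {i₁ i₂ i₃ i₄ : Fin L} (h₁₂ : i₁ ≠ i₂)
    (h₁₃ : i₁ ≠ i₃) (h₁₄ : i₁ ≠ i₄) (h₂₃ : i₂ ≠ i₃) (h₂₄ : i₂ ≠ i₄) (h₃₄ : i₃ ≠ i₄)
    (F : Fin 2 → Fin 2 → Fin 2 → Fin 2 → ℂ) (w : (Fin L → Fin 2) → ℂ)
    (w₁ : ∀ α s, w (update α i₁ s) = w α) (w₂ : ∀ α s, w (update α i₂ s) = w α)
    (w₃ : ∀ α s, w (update α i₃ s) = w α) (α : Fin L → Fin 2) :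
    applyRc τ t i₁ i₂ (applyRc τ s i₂ i₃ fun α => F (α i₁) (α i₂) (α i₃) (α i₄) * w α) α
      = pairRc τ t (fun a b => pairRc τ s (fun b' c => F a b' c (α i₄)) b (α i₃)) (α i₁) (α i₂) *
          w α := by
  simp only [applyRc, pairRc, w₁, w₂, w₃, update_self, update_of_ne h₁₂, update_of_ne h₁₃,
    update_of_ne h₁₄.symm, update_of_ne h₂₃, update_of_ne h₂₄.symm, update_of_ne h₃₄.symm,
    update_of_ne h₁₃.symm, update_of_ne h₂₃.symm, Finset.sum_mul, Finset.mul_sum, mul_assoc]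

theorem applyRc_applyRc_right (τ s t : ℂ) {L : ℕ} {i₁ i₂ i₃ i₄ : Fin L} (h₁₂ : i₁ ≠ i₂)
    (h₁₃ : i₁ ≠ i₃) (h₁₄ : i₁ ≠ i₄) (h₂₃ : i₂ ≠ i₃) (h₂₄ : i₂ ≠ i₄) (h₃₄ : i₃ ≠ i₄)
    (F : Fin 2 → Fin 2 → Fin 2 → Fin 2 → ℂ) (w : (Fin L → Fin 2) → ℂ)
    (w₂ : ∀ α s, w (update α i₂ s) = w α) (w₃ : ∀ α s, w (update α i₃ s) = w α)
    (w₄ : ∀ α s, w (update α i₄ s) = w α) (α : Fin L → Fin 2) :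
    applyRc τ t i₃ i₄ (applyRc τ s i₂ i₃ fun α => F (α i₁) (α i₂) (α i₃) (α i₄) * w α) α
      = pairRc τ t (fun c d => pairRc τ s (fun b c' => F (α i₁) b c' d) (α i₂) c) (α i₃) (α i₄) *
          w α := by
  simp only [applyRc, pairRc, w₂, w₃, w₄, update_self, update_of_ne h₁₂, update_of_ne h₁₃,
    update_of_ne h₁₄, update_of_ne h₂₃, update_of_ne h₂₄, update_of_ne h₃₄,
    update_of_ne h₃₄.symm, update_of_ne h₂₄.symm, Finset.sum_mul, Finset.mul_sum, mul_assoc]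

theorem swap_swap_swap_eq_swap_swap_swap {ι : Type*} [DecidableEq ι] {i₁ i₂ i₃ i₄ : ι}
    (h₁₂ : i₁ ≠ i₂) (h₁₃ : i₁ ≠ i₃) (h₁₄ : i₁ ≠ i₄) (h₂₃ : i₂ ≠ i₃) (h₂₄ : i₂ ≠ i₄)
    (h₃₄ : i₃ ≠ i₄) (l : ι) :
    Equiv.swap i₁ i₃ (Equiv.swap i₂ i₄ (Equiv.swap i₂ i₃ l))
      = Equiv.swap i₂ i₃ (Equiv.swap i₃ i₄ (Equiv.swap i₁ i₂ l)) := by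
  simp only [Equiv.swap_apply_def]
  split_ifs <;> simp_all

theorem interleave_comp_swap (x : Fin n → ℂ) (m m' : Fin n) (l : Fin (2 * n + 1)) :
    interleave (fun i => x (Equiv.swap m m' i)) l = interleave x
      (Equiv.swap (siteL m) (siteL m') (Equiv.swap (siteR m) (siteR m') l)) := by
  rcases site_cases l with ⟨q, rfl⟩ | ⟨q, rfl⟩ | rfl
  · have hswap : Equiv.swap (siteL m) (siteL m') (siteL q) = siteL (Equiv.swap m m' q) := by
      simp only [Equiv.swap_apply_def, siteL_inj]
      split_ifs <;> rfl
    rw [Equiv.swap_apply_of_ne_of_ne (siteL_ne_siteR _ _) (siteL_ne_siteR _ _), hswap,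
      interleave_siteL, interleave_siteL]
  · have hswap : Equiv.swap (siteR m) (siteR m') (siteR q) = siteR (Equiv.swap m m' q) := by
      simp only [Equiv.swap_apply_def, siteR_inj]
      split_ifs <;> rfl
    rw [hswap, Equiv.swap_apply_of_ne_of_ne (siteL_ne_siteR _ _).symm (siteL_ne_siteR _ _).symm,
      interleave_siteR, interleave_siteR]
  · rw [Equiv.swap_apply_of_ne_of_ne (siteR_ne_siteLast _).symm (siteR_ne_siteLast _).symm,
      Equiv.swap_apply_of_ne_of_ne (siteL_ne_siteLast _).symm (siteL_ne_siteLast _).symm,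
      interleave_siteLast, interleave_siteLast]

theorem boundaryWeight_univ_eq_mul_erase_erase {m m' : Fin n} (hm : m ≠ m') (x : Fin n → ℂ)
    (α : Fin (2 * n + 1) → Fin 2) :
    boundaryWeight k v Finset.univ x α
      = k (x m) (α (siteL m)) (α (siteR m)) * k (x m') (α (siteL m')) (α (siteR m')) *
          boundaryWeight k v ((Finset.univ.erase m).erase m') x α := by
  rw [boundaryWeight_eq_mul_erase (Finset.mem_univ m),
    boundaryWeight_eq_mul_erase (Finset.mem_erase.2 ⟨hm.symm, Finset.mem_univ m'⟩), mul_assoc]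

theorem boundaryWeight_erase_erase_comp_swap (m m' : Fin n) (x : Fin n → ℂ)
    (α : Fin (2 * n + 1) → Fin 2) :
    boundaryWeight k v ((Finset.univ.erase m).erase m') (fun i => x (Equiv.swap m m' i)) α
      = boundaryWeight k v ((Finset.univ.erase m).erase m') x α :=
  boundaryWeight_congr (fun q hq => by
    rw [Equiv.swap_apply_of_ne_of_ne (Finset.ne_of_mem_erase (Finset.mem_of_mem_erase hq))
      (Finset.ne_of_mem_erase hq)]) α

theorem rv_mul_rv_mul_boundarySum (h1 : PsiP1 τ Ψ) (x : Fin n → ℂ) {m m' : Fin n}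
    (hm : (m' : ℕ) = m + 1) :
    rv τ (x m' - x m) * (rv τ (-x m' - x m) * boundarySum k v Ψ n x)
      = ∑ α, pairRc τ (x m' - x m)
          (fun c d => pairRc τ (-x m' - x m)
            (fun b c' => k (x m) (α (siteL m)) b * k (x m') c' d) (α (siteR m)) c)
          (α (siteL m')) (α (siteR m')) *
        boundaryWeight k v ((Finset.univ.erase m).erase m') x α *
        Ψ n (fun l => interleave x
          (Equiv.swap (siteR m) (siteL m') (Equiv.swap (siteL m') (siteR m') l))) α := by
  have hne : m ≠ m' := by grind
  have hmem : m ∉ (Finset.univ.erase m).erase m' := fun h =>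
    Finset.notMem_erase m _ (Finset.mem_of_mem_erase h)
  have hL : siteL m ≠ siteL m' := mt siteL_inj.1 hne
  have hR : siteR m ≠ siteR m' := mt siteR_inj.1 hne
  have hadj : (siteL m' : ℕ) = siteR m + 1 := by grind [siteL, siteR]
  rw [boundarySum, rv_mul_sum_mul_Psi_swap h1 hadj
      (u := fun l => interleave x (Equiv.swap (siteR m) (siteL m') l)) (by simp)
      (by simp [interleave_siteL, interleave_siteR, sub_eq_neg_add, add_comm]),
    rv_mul_sum_mul_Psi_swap h1 (i := siteL m') (j := siteR m') rfl
      (u := fun l => interleave x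
        (Equiv.swap (siteR m) (siteL m') (Equiv.swap (siteL m') (siteR m') l))) (by simp)
      (by simp [Equiv.swap_apply_of_ne_of_ne hR.symm (siteL_ne_siteR m' m').symm,
        interleave_siteR, sub_eq_neg_add, add_comm])]
  refine Finset.sum_congr rfl fun α _ => congrArg (· * _) ?_
  rw [funext (boundaryWeight_univ_eq_mul_erase_erase hne x)]
  exact applyRc_applyRc_right τ _ _ (siteL_ne_siteR m m) hL (siteL_ne_siteR m m')
    (siteL_ne_siteR m' m).symm hR (siteL_ne_siteR m' m') (fun a b c d => k (x m) a b * k (x m') c d)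
    _ (boundaryWeight_update_siteR hmem x)
    (boundaryWeight_update_siteL (Finset.notMem_erase m' _) x)
    (boundaryWeight_update_siteR (Finset.notMem_erase m' _) x) α

theorem rv_mul_rv_mul_boundarySum_comp_swap (h1 : PsiP1 τ Ψ) (x : Fin n → ℂ) {m m' : Fin n}
    (hm : (m' : ℕ) = m + 1) :
    rv τ (x m' - x m) * (rv τ (-x m' - x m) *
        boundarySum k v Ψ n fun i => x (Equiv.swap m m' i))
      = ∑ α, pairRc τ (x m' - x m)
          (fun a b => pairRc τ (-x m' - x m)
            (fun b' c => k (x m') a b' * k (x m) c (α (siteR m'))) b (α (siteL m')))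
          (α (siteL m)) (α (siteR m)) *
        boundaryWeight k v ((Finset.univ.erase m).erase m') x α *
        Ψ n (fun l => interleave x
          (Equiv.swap (siteR m) (siteL m') (Equiv.swap (siteL m') (siteR m') l))) α := by
  have hne : m ≠ m' := by grind
  have hmem : m ∉ (Finset.univ.erase m).erase m' := fun h =>
    Finset.notMem_erase m _ (Finset.mem_of_mem_erase h)
  have hL : siteL m ≠ siteL m' := mt siteL_inj.1 hne
  have hR : siteR m ≠ siteR m' := mt siteR_inj.1 hne
  have hadj : (siteL m' : ℕ) = siteR m + 1 := by grind [siteL, siteR]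
  rw [boundarySum, rv_mul_sum_mul_Psi_swap h1 hadj
      (u := fun l => interleave (fun i => x (Equiv.swap m m' i))
        (Equiv.swap (siteR m) (siteL m') l)) (by simp)
      (by simp [interleave_siteL, interleave_siteR]),
    rv_mul_sum_mul_Psi_swap h1 (i := siteL m) (j := siteR m) rfl
      (u := fun l => interleave x
        (Equiv.swap (siteR m) (siteL m') (Equiv.swap (siteL m') (siteR m') l)))
      (fun l => by
        rw [interleave_comp_swap, swap_swap_swap_eq_swap_swap_swap (siteL_ne_siteR m m) hL
          (siteL_ne_siteR m m') (siteL_ne_siteR m' m).symm hR (siteL_ne_siteR m' m')])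
      (by simp [Equiv.swap_apply_of_ne_of_ne hL (siteL_ne_siteR m m'),
        Equiv.swap_apply_of_ne_of_ne (siteL_ne_siteR m m) hL,
        Equiv.swap_apply_of_ne_of_ne (siteL_ne_siteR m' m).symm hR, interleave_siteL])]
  refine Finset.sum_congr rfl fun α _ => congrArg (· * _) ?_
  rw [funext (boundaryWeight_univ_eq_mul_erase_erase hne _)]
  simp only [Equiv.swap_apply_left, Equiv.swap_apply_right, boundaryWeight_erase_erase_comp_swap]
  exact applyRc_applyRc_left τ _ _ (siteL_ne_siteR m m) hL (siteL_ne_siteR m m')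
    (siteL_ne_siteR m' m).symm hR (siteL_ne_siteR m' m') (fun a b c d => k (x m') a b * k (x m) c d)
    _ (boundaryWeight_update_siteL hmem x) (boundaryWeight_update_siteR hmem x)
    (boundaryWeight_update_siteL (Finset.notMem_erase m' _) x) α

theorem boundarySum_swap (hτ : 0 < τ.im) (hk : IsBoundaryKernel τ k G) (hent : PsiEntire Ψ)
    (h1 : PsiP1 τ Ψ) (h3 : PsiP3 τ Ψ) (x : Fin n → ℂ) {m m' : Fin n} (hm : (m' : ℕ) = m + 1) :
    boundarySum k v Ψ n (fun i => x (Equiv.swap m m' i)) = boundarySum k v Ψ n x := by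
  have hne : m' ≠ m := by grind
  have hr := differentiable_rv hτ
  obtain ⟨u, hu⟩ := exists_rv_ne_zero hτ
  have hr0 (c : ℂ) : ∃ z, rv τ (c - z) ≠ 0 := ⟨c - u, by rwa [sub_sub_cancel]⟩
  have hcomp (z : ℂ) : (fun i => update x m z (Equiv.swap m m' i))
      = update (fun i => x (Equiv.swap m m' i)) m' z := by
    funext i
    simp only [update_apply, Equiv.swap_apply_eq_iff, Equiv.swap_apply_left]
  have hZ := differentiable_boundarySum (v := v) hτ hk hent h3 x m
  have hZ' := differentiable_boundarySum (v := v) hτ hk hent h3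
    (fun i => x (Equiv.swap m m' i)) m'
  have hexchange (z : ℂ) : rv τ (x m' - z) * (rv τ (-x m' - z) *
        boundarySum k v Ψ n (update (fun i => x (Equiv.swap m m' i)) m' z))
      = rv τ (x m' - z) * (rv τ (-x m' - z) * boundarySum k v Ψ n (update x m z)) := by
    have hA := rv_mul_rv_mul_boundarySum_comp_swap (k := k) (v := v) h1 (update x m z) hm
    have hB := rv_mul_rv_mul_boundarySum (k := k) (v := v) h1 (update x m z) hm
    have hAB := hA.trans (.trans (Finset.sum_congr rfl fun α _ => congrArg (· * _ * _)
      (hk.exchange _ _ _ _ _ _)) hB.symm)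
    rwa [update_self, update_of_ne hne, hcomp] at hAB
  have hmain := eq_of_entire_mul_left_eq (by fun_prop) hZ' hZ (hr0 (-x m'))
    (eq_of_entire_mul_left_eq (by fun_prop) (.mul (by fun_prop) hZ') (.mul (by fun_prop) hZ)
      (hr0 (x m')) hexchange) (x m)
  rwa [update_eq_self, ← hcomp, update_eq_self] at hmain

theorem boundarySum_perm (hτ : 0 < τ.im) (hk : IsBoundaryKernel τ k G) (hent : PsiEntire Ψ)
    (h1 : PsiP1 τ Ψ) (h3 : PsiP3 τ Ψ) (x : Fin n → ℂ) (σ : Equiv.Perm (Fin n)) :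
    boundarySum k v Ψ n (fun i => x (σ i)) = boundarySum k v Ψ n x := by
  cases n with
  | zero => exact congrArg _ (funext fun i => i.elim0)
  | succ N =>
    have hσ : σ ∈ Submonoid.closure
        (Set.range fun i : Fin N => Equiv.swap i.castSucc i.succ) := by
      rw [Equiv.Perm.mclosure_swap_castSucc_succ]
      trivial
    induction hσ using Submonoid.closure_induction generalizing x with
    | mem σ h =>
      obtain ⟨i, rfl⟩ := h
      exact boundarySum_swap hτ hk hent h1 h3 x (by simp)
    | one => rfl
    | mul σ ρ _ _ ihσ ihρ => exact (ihρ (fun i => x (σ i))).trans (ihσ x)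

end Exchange

/-! ### Even theta functions of norm `0` -/

section EvenTheta

open Function

variable {τ : ℂ}

/-- The space of even theta functions of degree `m`, nome `e^{iπτ}` and norm `0`; for even `m`, the
only case needed, the sign `(-1)^m` in the translation by `π` disappears. -/
def evenTheta (τ : ℂ) (m : ℕ) : Submodule ℂ (ℂ → ℂ) where
  carrier := {h | h ∈ thetaSpace τ 1 ((-(pnome τ)) ^ m)⁻¹ m ∧ Function.Even h}
  zero_mem' := ⟨zero_mem _, fun _ => rfl⟩
  add_mem' hf hg := ⟨add_mem hf.1 hg.1, hf.2.add hg.2⟩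
  smul_mem' c _ hf := ⟨Submodule.smul_mem _ c hf.1, hf.2.const_smul c⟩

theorem thetaLike_iff {m n : ℕ} {X : (Fin n → ℂ) → ℂ} :
    ThetaLike τ m X ↔ ∀ x i, (fun z => X (update x i z)) ∈ evenTheta τ m := by
  simp only [ThetaLike, evenTheta, thetaSpace, Function.Even, Submodule.mem_mk,
    AddSubmonoid.mem_mk, AddSubsemigroup.mem_mk, Set.mem_ofPred_eq, one_mul, and_assoc]

theorem inv_neg_pnome_pow (τ : ℂ) (m : ℕ) :
    ((-(pnome τ)) ^ (2 * m))⁻¹ = exp (-I * (2 * m * (Real.pi * τ))) := by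
  rw [pow_mul, neg_sq, ← pow_mul, pnome, ← exp_nat_mul, ← exp_neg]
  push_cast
  ring_nf

theorem exp_six_mul_I_mul_ηc : exp (6 * I * ηc) = 1 := by
  rw [← exp_two_pi_mul_I, ← three_mul_ηc]
  ring_nf

theorem exists_evenTheta_eq_mul {n : ℕ} {f G : ℂ → ℂ}
    (hG : G ∈ thetaSpace τ 1 (-exp (-I * (2 * (Real.pi * τ) + 4 * ηc))) 2)
    (hG0 : ∀ z, G z = 0 → G (-z) ≠ 0)
    (hf : f ∈ thetaSpace τ 1 (-exp (-I * ((2 * n + 2) * (Real.pi * τ) - 2 * ηc))) (2 * n + 2))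
    (hfG : ∀ z, G z * f (-z) = G (-z) * f z) :
    ∃ h ∈ evenTheta τ (2 * n), ∀ z, f z = G z * h z := by
  have hb : -exp (-I * ((2 * n + 2) * (Real.pi * τ) - 2 * ηc))
      = -exp (-I * (2 * (Real.pi * τ) + 4 * ηc)) * ((-(pnome τ)) ^ (2 * n))⁻¹ := by
    rw [inv_neg_pnome_pow, neg_mul (exp _), ← exp_add, ← mul_one (exp (_ + _)),
      ← exp_six_mul_I_mul_ηc, ← exp_add]
    ring_nf
  have hG0' : ∃ z, G z ≠ 0 := ⟨0, fun h => hG0 0 h (by rwa [neg_zero])⟩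
  obtain ⟨h, hh, heven, hfac⟩ := exists_even_entire_quotient hf.1 hG.1 hG0 hfG
  rw [hb, ← one_mul (1 : ℂ), add_comm (2 * n)] at hf
  exact ⟨h, ⟨mem_thetaSpace_of_eq_mul hG one_ne_zero (neg_ne_zero.2 (exp_ne_zero _)) hG0' hf hh
    hfac, heven⟩, hfac⟩

theorem exists_evenTheta_eq_th1_mul_th1_mul (hτ : 0 < τ.im) {n : ℕ} {f : ℂ → ℂ}
    (hf : f ∈ evenTheta τ (2 * (n + 1))) (hf0 : f (-ηc) = 0) :
    ∃ h ∈ evenTheta τ (2 * n), ∀ z, f z = th1 (ηc + z) τ * th1 (ηc - z) τ * h z := by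
  have hθ := differentiable_th1 hτ
  have hb : ((-(pnome τ)) ^ (2 * (n + 1)))⁻¹ = -exp (-I * (Real.pi * τ - 2 * (-ηc))) *
      (-exp (-I * (Real.pi * τ - 2 * ηc)) * ((-(pnome τ)) ^ (2 * n))⁻¹) := by
    rw [inv_neg_pnome_pow, inv_neg_pnome_pow, neg_mul (exp _), neg_mul (exp _), mul_neg,
      neg_neg, ← exp_add, ← exp_add]
    push_cast
    ring_nf
  have hmem : f ∈ thetaSpace τ (-1 * (-1 * 1)) (-exp (-I * (Real.pi * τ - 2 * (-ηc))) *
      (-exp (-I * (Real.pi * τ - 2 * ηc)) * ((-(pnome τ)) ^ (2 * n))⁻¹)) (1 + (1 + 2 * n)) := by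
    rw [← hb, mul_one, neg_one_mul, neg_neg, show 1 + (1 + 2 * n) = 2 * (n + 1) by ring]
    exact hf.1
  have hb0 : ((-(pnome τ)) ^ (2 * n))⁻¹ ≠ 0 := by
    rw [inv_neg_pnome_pow]
    exact exp_ne_zero _
  obtain ⟨q, hq, hfq⟩ := exists_mem_thetaSpace_eq_th1_sub_mul hτ (by norm_num)
    (mul_ne_zero (neg_ne_zero.2 (exp_ne_zero _)) hb0) hmem hf0
  have hqη : q ηc = 0 := by
    have hη := hfq ηc
    rw [← hf.2, hf0, sub_neg_eq_add, ← two_mul] at hη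
    exact (mul_eq_zero.1 hη.symm).resolve_left (th1_two_mul_ηc_ne_zero hτ)
  obtain ⟨h, hh, hqh⟩ := exists_mem_thetaSpace_eq_th1_sub_mul hτ one_ne_zero hb0 hq hqη
  have hfh (z : ℂ) : f z = th1 (ηc + z) τ * th1 (ηc - z) τ * (-h) z := by
    rw [hfq, hqh, ← neg_sub ηc z, th1_neg, sub_neg_eq_add, add_comm z, Pi.neg_apply]
    ring
  refine ⟨-h, ⟨neg_mem hh, ?_⟩, hfh⟩
  refine eq_of_entire_mul_left_eq (f := fun z => th1 (ηc + z) τ * th1 (ηc - z) τ) (by fun_prop)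
    (hh.1.neg.comp differentiable_neg) hh.1.neg ⟨0, ?_⟩ fun z => ?_
  · simpa using th1_ηc_ne_zero hτ
  · rw [← hfh, ← hf.2, hfh, sub_neg_eq_add, ← sub_eq_add_neg, mul_comm (th1 (ηc - z) τ)]

end EvenTheta

section DoubledArgument

variable {τ : ℂ}

theorem comp_two_mul_add_mem_thetaSpace {a b : ℂ} {m : ℕ} {f : ℂ → ℂ}
    (hf : f ∈ thetaSpace (2 * τ) a b m) (c : ℂ) :
    (fun z => f (2 * (c + z))) ∈ thetaSpace τ (a * a) (b * exp (-4 * I * (m * c))) (2 * m) := by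
  obtain ⟨hdiff, hπ, hτ⟩ := hf
  refine ⟨hdiff.comp (by fun_prop), fun z => ?_, fun z => ?_⟩ <;> beta_reduce
  · rw [show 2 * (c + (z + Real.pi)) = 2 * (c + z) + Real.pi + Real.pi by ring, hπ, hπ, mul_assoc]
  · rw [show 2 * (c + (z + Real.pi * τ)) = 2 * (c + z) + Real.pi * (2 * τ) by ring, hτ,
      mul_assoc b (exp _) (exp _), ← exp_add]
    push_cast
    ring_nf

theorem th4_mem_thetaSpace (hτ : 0 < τ.im) :
    (fun z => th4 z τ) ∈ thetaSpace τ 1 (-exp (-I * (Real.pi * τ))) 1 := by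
  refine ⟨differentiable_th4 hτ, fun z => ?_, fun z => ?_⟩ <;> beta_reduce
  · rw [th4_add_pi, one_mul]
  · rw [th4_add_pi_mul, neg_mul (exp _) (exp _), ← exp_add]
    push_cast
    ring_nf

theorem th1_two_mul_ηc_add_mem_thetaSpace (hτ : 0 < τ.im) :
    (fun z => th1 (2 * (ηc + z)) (2 * τ)) ∈
      thetaSpace τ 1 (-exp (-I * (2 * (Real.pi * τ) + 4 * ηc))) 2 := by
  convert comp_two_mul_add_mem_thetaSpace (th1_sub_mem_thetaSpace (two_mul_im_pos hτ) 0) ηc using 2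
  · norm_num
  · rw [neg_mul (exp _), ← exp_add]
    push_cast
    ring_nf
  · rw [sub_zero]

theorem th4_two_mul_ηc_add_mem_thetaSpace (hτ : 0 < τ.im) :
    (fun z => th4 (2 * (ηc + z)) (2 * τ)) ∈
      thetaSpace τ 1 (-exp (-I * (2 * (Real.pi * τ) + 4 * ηc))) 2 := by
  convert comp_two_mul_add_mem_thetaSpace (th4_mem_thetaSpace (two_mul_im_pos hτ)) ηc using 2
  · norm_num
  · rw [neg_mul (exp _), ← exp_add]
    push_cast
    ring_nf

theorem th1_two_mul_ηc_sub_ne_zero (hτ : 0 < τ.im) {z : ℂ}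
    (hz : th1 (2 * (ηc + z)) (2 * τ) = 0) : th1 (2 * (ηc + -z)) (2 * τ) ≠ 0 := by
  intro hz'
  have hadd := th1_add_eq_zero (two_mul_im_pos hτ) hz' hz
  rw [← mul_add, add_add_add_comm, add_neg_cancel, add_zero] at hadd
  exact th1_four_mul_ηc_ne_zero (two_mul_im_pos hτ) (by convert hadd using 2; ring)

theorem th4_two_mul_ηc_sub_ne_zero (hτ : 0 < τ.im) {z : ℂ}
    (hz : th4 (2 * (ηc + z)) (2 * τ) = 0) : th4 (2 * (ηc + -z)) (2 * τ) ≠ 0 := by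
  intro hz'
  have hshift {w : ℂ} (hw : th4 w (2 * τ) = 0) : th1 (w + Real.pi * τ) (2 * τ) = 0 := by
    rw [th1_add_half, hw, mul_zero]
  have hadd := th1_add_eq_zero (two_mul_im_pos hτ) (hshift hz') (hshift hz)
  rw [show 2 * (ηc + z) + Real.pi * τ + (2 * (ηc + -z) + Real.pi * τ)
    = 4 * ηc + Real.pi * (2 * τ) by ring, th1_add_pi_mul, mul_eq_zero] at hadd
  exact th1_four_mul_ηc_ne_zero (two_mul_im_pos hτ)
    (hadd.resolve_left (neg_ne_zero.2 (exp_ne_zero _)))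

end DoubledArgument

section Factorisation

open Function

variable {τ : ℂ} {k : ℂ → Fin 2 → Fin 2 → ℂ} {v : Fin 2 → ℂ} {G : ℂ → ℂ} {Ψ : PsiFam} {n : ℕ}

theorem exists_thetaLike_factor (hτ : 0 < τ.im) (hk : IsBoundaryKernel τ k G)
    (hent : PsiEntire Ψ) (h1 : PsiP1 τ Ψ) (h2 : PsiP2 τ Ψ) (h3 : PsiP3 τ Ψ) {g : ℂ → ℂ}
    (hg : Differentiable ℂ g) (hg0 : ∃ z, g z ≠ 0) {m : ℕ}
    (hslice : ∀ x i, ∃ h ∈ evenTheta τ m, ∀ z, boundarySum k v Ψ n (update x i z) = g z * h z) :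
    ∃ X : (Fin n → ℂ) → ℂ, (∀ x, boundarySum k v Ψ n x = (∏ i, g (x i)) * X x) ∧
      ThetaLike τ m X ∧ ∀ (x : Fin n → ℂ) (σ : Equiv.Perm (Fin n)), X (fun i => x (σ i)) = X x := by
  obtain ⟨S, hS⟩ := exists_finset_thetaSpace_eq_zero hτ one_ne_zero (neg_ne_zero.2 (exp_ne_zero
    (-I * ((2 * n + 2) * (Real.pi * τ) - 2 * ηc)))) (2 * n + 2)
  have hZ (x : Fin n → ℂ) (i : Fin n) : (fun z => boundarySum k v Ψ n (update x i z)) ∈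
      (evenTheta τ m).map (LinearMap.mulLeft ℂ g) := by
    obtain ⟨h, hh, hfac⟩ := hslice x i
    exact ⟨h, hh, (funext hfac).symm⟩
  obtain ⟨X, hX, hmem⟩ := exists_prod_factor hS fun x i =>
    ⟨hZ x i, boundarySum_slice_mem_thetaSpace hτ hk hent h2 h3 x i⟩
  exact ⟨X, hX, thetaLike_iff.2 hmem, fun x σ => symmetric_of_prod_mul hg hg0
    (fun x i => (hmem x i).1.1) hX σ (fun x => boundarySum_perm hτ hk hent h1 h3 x σ) x⟩

theorem boundarySum_chibarC_slice (hτ : 0 < τ.im) (lam : ℂ) (hent : PsiEntire Ψ) (h1 : PsiP1 τ Ψ)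
    (h2 : PsiP2 τ Ψ) (h3 : PsiP3 τ Ψ) (x : Fin n → ℂ) (i : Fin n) :
    ∃ h ∈ evenTheta τ (2 * n), ∀ z, boundarySum (chibarC τ lam) v Ψ n (update x i z)
      = th1 (2 * (ηc + z)) (2 * τ) * h z := by
  have hk := isBoundaryKernel_chibarC lam hτ
  have hG := th1_two_mul_ηc_add_mem_thetaSpace hτ
  exact exists_evenTheta_eq_mul hG (fun _ => th1_two_mul_ηc_sub_ne_zero hτ)
    (boundarySum_slice_mem_thetaSpace hτ hk hent h2 h3 x i)
    (boundarySum_update_neg hτ hk hG.1 hent h1 h3 x i)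

theorem boundarySum_chiC_slice (hτ : 0 < τ.im) (lam : ℂ) (hent : PsiEntire Ψ) (h1 : PsiP1 τ Ψ)
    (h2 : PsiP2 τ Ψ) (h3 : PsiP3 τ Ψ) (h4 : PsiP4 Ψ) (x : Fin n → ℂ) (i : Fin n) :
    ∃ h ∈ evenTheta τ (2 * (n - 1)), ∀ z, boundarySum (chiC τ lam) v Ψ n (update x i z)
      = th4 (2 * (ηc + z)) (2 * τ) * th1 (ηc + z) τ * th1 (ηc - z) τ * h z := by
  have hk := isBoundaryKernel_chiC lam hτ
  have hG := th4_two_mul_ηc_add_mem_thetaSpace hτ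
  obtain ⟨f, hf, hZf⟩ := exists_evenTheta_eq_mul hG (fun _ => th4_two_mul_ηc_sub_ne_zero hτ)
    (boundarySum_slice_mem_thetaSpace (v := v) hτ hk hent h2 h3 x i)
    (boundarySum_update_neg hτ hk hG.1 hent h1 h3 x i)
  have hf0 : f (-ηc) = 0 := by
    have hη := hZf (-ηc)
    rw [boundarySum_neg_ηc h3 h4, add_neg_cancel, mul_zero, zero_eq_mul] at hη
    exact hη.resolve_left (th4_zero_ne_zero (two_mul_im_pos hτ))
  obtain ⟨n, rfl⟩ := Nat.exists_eq_add_of_lt i.pos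
  rw [zero_add] at hf
  obtain ⟨h, hh, hfh⟩ := exists_evenTheta_eq_th1_mul_th1_mul hτ hf hf0
  refine ⟨h, by simpa using hh, fun z => ?_⟩
  rw [hZf, hfh]
  ring

end Factorisation

theorem exists_Zbarfun_factor {τ : ℂ} (hτ : 0 < τ.im) (lam ε : ℂ) {Ψ : PsiFam}
    (hent : PsiEntire Ψ) (h1 : PsiP1 τ Ψ) (h2 : PsiP2 τ Ψ) (h3 : PsiP3 τ Ψ) (n : ℕ) :
    ∃ X : (Fin n → ℂ) → ℂ,
      (∀ x, Zbarfun τ lam ε Ψ n x = (∏ i, th1 (2 * (ηc + x i)) (2 * τ)) * X x) ∧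
      ThetaLike τ (2 * n) X ∧
      ∀ (x : Fin n → ℂ) (σ : Equiv.Perm (Fin n)), X (fun i => x (σ i)) = X x :=
  exists_thetaLike_factor (v := fun s => if s = 0 then 1 else ε) hτ
    (isBoundaryKernel_chibarC lam hτ) hent h1 h2 h3 (th1_two_mul_ηc_add_mem_thetaSpace hτ).1
    (exists_th1_two_mul_ηc_add_ne_zero hτ) (boundarySum_chibarC_slice hτ lam hent h1 h2 h3)

theorem exists_Zfun_factor {τ : ℂ} (hτ : 0 < τ.im) (lam : ℂ) {Ψ : PsiFam}
    (hent : PsiEntire Ψ) (h1 : PsiP1 τ Ψ) (h2 : PsiP2 τ Ψ) (h3 : PsiP3 τ Ψ) (h4 : PsiP4 Ψ) (n : ℕ) :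
    ∃ X : (Fin n → ℂ) → ℂ,
      (∀ x, Zfun τ lam Ψ n x
        = (∏ i, th4 (2 * (ηc + x i)) (2 * τ) * th1 (ηc + x i) τ * th1 (ηc - x i) τ) * X x) ∧
      ThetaLike τ (2 * (n - 1)) X ∧
      ∀ (x : Fin n → ℂ) (σ : Equiv.Perm (Fin n)), X (fun i => x (σ i)) = X x := by
  have hθ := differentiable_th1 hτ
  have hG := (th4_two_mul_ηc_add_mem_thetaSpace hτ).1
  have hη : ∃ z, th1 (ηc + z) τ ≠ 0 := ⟨0, by simpa using th1_ηc_ne_zero hτ⟩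
  have hη' : ∃ z, th1 (ηc - z) τ ≠ 0 := ⟨0, by simpa using th1_ηc_ne_zero hτ⟩
  have hGη := exists_mul_ne_zero_of_entire hG (by fun_prop)
    (exists_th4_two_mul_ηc_add_ne_zero hτ) hη
  exact exists_thetaLike_factor (v := fun s => if s = 0 then 1 else 0) hτ
    (isBoundaryKernel_chiC lam hτ) hent h1 h2 h3 (by fun_prop)
    (exists_mul_ne_zero_of_entire (by fun_prop) (by fun_prop) hGη hη')
    (boundarySum_chiC_slice hτ lam hent h1 h2 h3 h4)

theorem stmt13 (τ lam : ℂ) (hτ : 0 < τ.im) (Ψ : PsiFam)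
    (hent : PsiEntire Ψ) (h1 : PsiP1 τ Ψ) (h2 : PsiP2 τ Ψ) (h3 : PsiP3 τ Ψ) (h4 : PsiP4 Ψ)
    (n : ℕ) (hn : 1 ≤ n) :
    (∃ X : (Fin n → ℂ) → ℂ,
      (∀ x, Zfun τ lam Ψ n x
          = (∏ i, th4 (2*(ηc + x i)) (2*τ) * th1 (ηc + x i) τ * th1 (ηc - x i) τ) * X x) ∧
      ThetaLike τ (2*(n-1)) X ∧
      (2 ≤ n → ∀ (x : Fin n → ℂ) (σ : Equiv.Perm (Fin n)), X (fun i => x (σ i)) = X x)) ∧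
    (∃ Xp : (Fin n → ℂ) → ℂ,
      (∀ x, Zbarfun τ lam 1 Ψ n x = (∏ i, th1 (2*(ηc + x i)) (2*τ)) * Xp x) ∧
      ThetaLike τ (2*n) Xp ∧
      (2 ≤ n → ∀ (x : Fin n → ℂ) (σ : Equiv.Perm (Fin n)), Xp (fun i => x (σ i)) = Xp x)) ∧
    (∃ Xm : (Fin n → ℂ) → ℂ,
      (∀ x, Zbarfun τ lam (-1) Ψ n x = (∏ i, th1 (2*(ηc + x i)) (2*τ)) * Xm x) ∧
      ThetaLike τ (2*n) Xm ∧
      (2 ≤ n → ∀ (x : Fin n → ℂ) (σ : Equiv.Perm (Fin n)), Xm (fun i => x (σ i)) = Xm x)) := by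
  obtain ⟨X, hX, hθ, hsymm⟩ := exists_Zfun_factor hτ lam hent h1 h2 h3 h4 n
  obtain ⟨Xp, hXp, hθp, hsymmp⟩ := exists_Zbarfun_factor hτ lam 1 hent h1 h2 h3 n
  obtain ⟨Xm, hXm, hθm, hsymmm⟩ := exists_Zbarfun_factor hτ lam (-1) hent h1 h2 h3 n
  exact ⟨⟨X, hX, hθ, fun _ => hsymm⟩, ⟨Xp, hXp, hθp, fun _ => hsymmp⟩,
    ⟨Xm, hXm, hθm, fun _ => hsymmm⟩⟩

end
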